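/- Yang-Baxter relation for the elliptic 6j-symbols: let k, l ≥ 1 be integers and let a, b, c, e, f, g ∈ ℤ with a−b ≡ f−e ≡ k (mod 2), |a−b| ≤ k, |f−e| ≤ k, b−c ≡ g−f ≡ l (mod 2), |b−c| ≤ l, |g−f| ≤ l, and all of a, b, c, e, f, g > 2(k+l); assume r is irrational and u, v ∈ ℂ are such that every bracket appearing in a denominator of any nonzero summand is nonzero. Then Σ_{d ∈ ℤ} W^{(k,l)}(a,b;d,c | u−v) · L^{(k)}(d,c;f,e | u) · L^{(l)}(a,d;g,f | v) = Σ_{d ∈ ℤ} L^{(k)}(a,b;g,d | u) · L^{(l)}(b,c;d,e | v) · W^{(k,l)}(g,d;f,e | u−v), both sums having finitely many nonzero terms. -/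

import Mathlib

noncomputable section

open Complex Finset

namespace Ell

/-- `x^s = exp(-iπ s /(r τ))`. -/
def xp (τ : ℂ) (r : ℝ) (s : ℂ) : ℂ :=
  Complex.exp (-Complex.I * (Real.pi : ℂ) * s / ((r : ℂ) * τ))

/-- `Θ_p(z) = ∏_{j ≥ 0} (1 - z p^j)(1 - p^{j+1}/z)(1 - p^{j+1})`. -/
def Theta (p z : ℂ) : ℂ :=
  ∏' j : ℕ, ((1 - z * p ^ j) * (1 - p ^ (j + 1) / z) * (1 - p ^ (j + 1)))

/-- The bracket `[u] = x^{u²/r - u} Θ_p(x^{2u})` with `p = x^{2r}`. -/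
def br (τ : ℂ) (r : ℝ) (u : ℂ) : ℂ :=
  xp τ r (u ^ 2 / (r : ℂ) - u) * Theta (xp τ r (2 * (r : ℂ))) (xp τ r (2 * u))

/-- Elliptic shifted factorial `[u]_n = ∏_{j=0}^{n-1} [u+j]`. -/
def brF (τ : ℂ) (r : ℝ) (u : ℂ) (n : ℕ) : ℂ :=
  ∏ j ∈ Finset.range n, br τ r (u + (j : ℂ))

/-- Elliptic binomial coefficient `C_n^k(α,β,γ)`. -/
def Cnk (τ : ℂ) (r : ℝ) (k n : ℕ) (α β γ : ℂ) : ℂ :=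
  brF τ r 1 k / (brF τ r 1 n * brF τ r 1 (k - n)) *
    (brF τ r (α - γ) n * brF τ r (α + γ + (k : ℂ) - (n : ℂ)) n *
      brF τ r (α - β) (k - n) * brF τ r (α + β + (n : ℂ)) (k - n)) /
    (brF τ r (β - γ + (n : ℂ) - (k : ℂ)) n * brF τ r (γ - β - (n : ℂ)) (k - n) *
      brF τ r (β + γ) k)

/-- The elliptic 6j-symbol `R_n^m(α,β,γ,δ;k)`. -/
def Rnm (τ : ℂ) (r : ℝ) (k n m : ℕ) (α β γ δ : ℂ) : ℂ :=
  ∑ j ∈ Finset.range (min n m + 1),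
    Cnk τ r n j α γ (β + (k : ℂ) - (n : ℂ)) * Cnk τ r (k - j) (m - j) β (γ + (j : ℂ)) δ

/-- Terminating very-well-poised elliptic hypergeometric sum with explicit
truncation `N`:  `Σ_{j=0}^N ([u₀+2j]/[u₀]) ([u₀]_j/[1]_j) ∏ᵢ [uᵢ]_j/[u₀+1-uᵢ]_j`. -/
def Vsum (τ : ℂ) (r : ℝ) (u₀ : ℂ) (us : List ℂ) (N : ℕ) : ℂ :=
  ∑ j ∈ Finset.range (N + 1),
    br τ r (u₀ + 2 * (j : ℂ)) / br τ r u₀ * (brF τ r u₀ j / brF τ r 1 j) *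
      (us.map fun ui => brF τ r ui j / brF τ r (u₀ + 1 - ui) j).prod

/-- "Every bracket appearing in a denominator of `C_n^k(·,β,γ)` is nonzero". -/
def CdenomNZ (τ : ℂ) (r : ℝ) (k n : ℕ) (β γ : ℂ) : Prop :=
  brF τ r 1 n ≠ 0 ∧ brF τ r 1 (k - n) ≠ 0 ∧
    brF τ r (β - γ + (n : ℂ) - (k : ℂ)) n ≠ 0 ∧
    brF τ r (γ - β - (n : ℂ)) (k - n) ≠ 0 ∧ brF τ r (β + γ) k ≠ 0

/-- "Every bracket appearing in a denominator of `R_n^m(α,β,γ,δ;k)` is nonzero". -/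
def RdenomNZ (τ : ℂ) (r : ℝ) (k n m : ℕ) (β γ δ : ℂ) : Prop :=
  ∀ j ≤ min n m,
    CdenomNZ τ r n j γ (β + (k : ℂ) - (n : ℂ)) ∧
      CdenomNZ τ r (k - j) (m - j) (γ + (j : ℂ)) δ

/-- Jacobi theta `ϑ₁(v|σ)`. -/
def th1 (v σ : ℂ) : ℂ :=
  2 * Complex.exp (2 * (Real.pi : ℂ) * Complex.I * σ / 8) *
    (∏' n : ℕ, (1 - Complex.exp (2 * (Real.pi : ℂ) * Complex.I * σ) ^ (n + 1))) *
    Complex.sin ((Real.pi : ℂ) * v) *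
    ∏' n : ℕ,
      (1 - 2 * Complex.exp (2 * (Real.pi : ℂ) * Complex.I * σ) ^ (n + 1) *
            Complex.cos (2 * (Real.pi : ℂ) * v) +
        Complex.exp (2 * (Real.pi : ℂ) * Complex.I * σ) ^ (2 * (n + 1)))

/-- Jacobi theta `ϑ₀(v|σ)`. -/
def th0 (v σ : ℂ) : ℂ :=
  -Complex.I * Complex.exp ((Real.pi : ℂ) * Complex.I * (v + σ / 4)) * th1 (v + σ / 2) σ

/-- Jacobi theta `ϑ₂(v|σ)`. -/
def th2 (v σ : ℂ) : ℂ := th1 (v + 1 / 2) σ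

/-- Jacobi theta `ϑ₃(v|σ)`. -/
def th3 (v σ : ℂ) : ℂ :=
  Complex.exp ((Real.pi : ℂ) * Complex.I * (v + σ / 4)) * th1 (v + (σ + 1) / 2) σ

/-- Intertwining vector component `ψ_ε(u)^a_b`, `ε ∈ {1, -1}`. -/
def psi (τ : ℂ) (r : ℝ) (u : ℂ) (ε : ℤ) (a b : ℤ) : ℂ :=
  if ε = 1 then th0 ((((a : ℂ) - (b : ℂ)) * u + (a : ℂ)) / (2 * (r : ℂ))) (τ / 2)
  else th3 ((((a : ℂ) - (b : ℂ)) * u + (a : ℂ)) / (2 * (r : ℂ))) (τ / 2)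

/-- The constant `C = x^{-r/4} e^{-iπ/4} τ^{1/2}`. -/
def Cc (τ : ℂ) (r : ℝ) : ℂ :=
  xp τ r (-(r : ℂ) / 4) * Complex.exp (-(Real.pi : ℂ) * Complex.I / 4) * τ ^ (1 / 2 : ℂ)

/-- Dual intertwining vector component `ψ*_ε(u)^a_b = -ε(a-b) C² ψ_{-ε}(u-1)^a_b/(2[b][u])`. -/
def psiStar (τ : ℂ) (r : ℝ) (u : ℂ) (ε : ℤ) (a b : ℤ) : ℂ :=
  -(ε : ℂ) * ((a : ℂ) - (b : ℂ)) * Cc τ r ^ 2 * psi τ r (u - 1) (-ε) a b /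
    (2 * br τ r (b : ℂ) * br τ r u)

/-- Sign attached to a boolean. -/
def sg (b : Bool) : ℤ := if b then 1 else -1

/-- Canonical path from `a`: up for `j ≤ n`, down afterwards. -/
def cpathZ (a n : ℤ) (j : ℕ) : ℤ := if (j : ℤ) ≤ n then a + j else a + 2 * n - j

/-- Admissibility: `a - b ∈ {-k, -k+2, …, k}`. -/
def adm (k : ℕ) (a b : ℤ) : Prop := (a - b).natAbs ≤ k ∧ (a - b - (k : ℤ)) % 2 = 0

instance (k : ℕ) (a b : ℤ) : Decidable (adm k a b) := by unfold adm; infer_instance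

/-- Fused intertwining vector component `ψ^{(k)}_μ(u)^a_b` (zero if `a,b` not admissible). -/
def psiF (τ : ℂ) (r : ℝ) (k : ℕ) (μ : ℤ) (u : ℂ) (a b : ℤ) : ℂ :=
  if adm k a b then
    ∑ ε ∈ Finset.univ.filter fun ε : Fin k → Bool => (∑ j, sg (ε j)) = μ,
      ∏ j : Fin k,
        psi τ r (u + (k : ℂ) - (((j : ℕ) + 1 : ℕ) : ℂ)) (sg (ε j))
          (cpathZ a (((k : ℤ) - (a - b)) / 2) (j : ℕ))
          (cpathZ a (((k : ℤ) - (a - b)) / 2) ((j : ℕ) + 1))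
  else 0

/-- Partial-sum path attached to a sign sequence `δ`, starting at `a`. -/
def spath (k : ℕ) (a : ℤ) (δ : Fin k → Bool) (j : ℕ) : ℤ :=
  a + ∑ i ∈ Finset.range j, if h : i < k then sg (δ ⟨i, h⟩) else 0

/-- Fused dual intertwining vector component `ψ*^{(k)}_μ(u)^b_a`
(sum over all admissible paths from `a` to `b`; zero if not admissible). -/
def psiStarF (τ : ℂ) (r : ℝ) (k : ℕ) (μ : ℤ) (u : ℂ) (b a : ℤ) : ℂ :=
  if adm k a b then
    ∑ δ ∈ Finset.univ.filter fun δ : Fin k → Bool => (∑ j, sg (δ j)) = b - a,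
      ∏ j : Fin k,
        psiStar τ r (u + (k : ℂ) - (((j : ℕ) + 1 : ℕ) : ℂ))
          (if ((j : ℕ) + 1 : ℤ) ≤ ((k : ℤ) + μ) / 2 then 1 else -1)
          (spath k a δ ((j : ℕ) + 1)) (spath k a δ (j : ℕ))
  else 0

/-- The `L`-matrix `L^{(k)}(a,b;c,d|u) = Σ_μ ψ*^{(k)}_μ(u)^d_c ψ^{(k)}_μ(u)^a_b`. -/
def Lk (τ : ℂ) (r : ℝ) (k : ℕ) (u : ℂ) (a b c d : ℤ) : ℂ :=
  ∑ i ∈ Finset.range (k + 1),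
    psiStarF τ r k ((k : ℤ) - 2 * (i : ℤ)) u d c * psiF τ r k ((k : ℤ) - 2 * (i : ℤ)) u a b

/-- Normalized face weight `W̄(a,b;d,c|u)` (arguments ordered (NW, NE; SW, SE)). -/
def Wb (τ : ℂ) (r : ℝ) (u : ℂ) (a b d c : ℤ) : ℂ :=
  if b = a + 1 ∧ d = a + 1 ∧ c = a + 2 then 1
  else if b = a - 1 ∧ d = a - 1 ∧ c = a - 2 then 1
  else if b = a + 1 ∧ d = a + 1 ∧ c = a then
    br τ r ((a : ℂ) - u) * br τ r 1 / (br τ r (a : ℂ) * br τ r (1 + u))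
  else if b = a - 1 ∧ d = a - 1 ∧ c = a then
    br τ r ((a : ℂ) + u) * br τ r 1 / (br τ r (a : ℂ) * br τ r (1 + u))
  else if b = a + 1 ∧ d = a - 1 ∧ c = a then
    br τ r ((a : ℂ) + 1) * br τ r u / (br τ r (a : ℂ) * br τ r (1 + u))
  else if b = a - 1 ∧ d = a + 1 ∧ c = a then
    br τ r ((a : ℂ) - 1) * br τ r u / (br τ r (a : ℂ) * br τ r (1 + u))
  else 0

/-- Sequence with prescribed endpoints `d`, `c` and free interior values `f`. -/
def seqI (k : ℕ) (d c : ℤ) (f : Fin (k - 1) → ℤ) (j : ℕ) : ℤ :=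
  if h0 : j = 0 then d
  else if hj : j < k then f ⟨j - 1, by omega⟩ else c

/-- Fused face weight `W^{(k,1)}(a,b;d,c|u)`. -/
def Wk1 (τ : ℂ) (r : ℝ) (k : ℕ) (u : ℂ) (a b d c : ℤ) : ℂ :=
  if adm k a b then
    ∑' f : Fin (k - 1) → ℤ,
      ∏ j ∈ Finset.range k,
        Wb τ r (u + (k : ℂ) - ((j : ℂ) + 1))
          (cpathZ a (((k : ℤ) - (a - b)) / 2) j)
          (cpathZ a (((k : ℤ) - (a - b)) / 2) (j + 1))
          (seqI k d c f j) (seqI k d c f (j + 1))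
  else 0

/-- Fused face weight `W^{(k,l)}(a,b;d,c|u)`. -/
def Wkl (τ : ℂ) (r : ℝ) (k l : ℕ) (u : ℂ) (a b d c : ℤ) : ℂ :=
  if adm l b c then
    ∑' g : Fin (l - 1) → ℤ,
      ∏ i ∈ Finset.range l,
        Wk1 τ r k (u - (l : ℂ) + ((i : ℂ) + 1))
          (seqI l a d g i) (cpathZ b (((l : ℤ) - (b - c)) / 2) i)
          (seqI l a d g (i + 1)) (cpathZ b (((l : ℤ) - (b - c)) / 2) (i + 1))
  else 0

/-- Eight-vertex weight `ā(u)`. -/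
def aw (τ : ℂ) (r : ℝ) (u : ℂ) : ℂ :=
  th2 (1 / (2 * (r : ℂ))) (τ / 2) * th2 (u / (2 * (r : ℂ))) (τ / 2) /
    (th2 0 (τ / 2) * th2 ((1 + u) / (2 * (r : ℂ))) (τ / 2))

/-- Eight-vertex weight `b̄(u)`. -/
def bw (τ : ℂ) (r : ℝ) (u : ℂ) : ℂ :=
  th2 (1 / (2 * (r : ℂ))) (τ / 2) * th1 (u / (2 * (r : ℂ))) (τ / 2) /
    (th2 0 (τ / 2) * th1 ((1 + u) / (2 * (r : ℂ))) (τ / 2))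

/-- Eight-vertex weight `c̄(u)`. -/
def cw (τ : ℂ) (r : ℝ) (u : ℂ) : ℂ :=
  th1 (1 / (2 * (r : ℂ))) (τ / 2) * th2 (u / (2 * (r : ℂ))) (τ / 2) /
    (th2 0 (τ / 2) * th1 ((1 + u) / (2 * (r : ℂ))) (τ / 2))

/-- Eight-vertex weight `d̄(u)`. -/
def dw (τ : ℂ) (r : ℝ) (u : ℂ) : ℂ :=
  -(th1 (1 / (2 * (r : ℂ))) (τ / 2) * th1 (u / (2 * (r : ℂ))) (τ / 2)) /
    (th2 0 (τ / 2) * th2 ((1 + u) / (2 * (r : ℂ))) (τ / 2))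

/-- The normalized eight-vertex `R`-matrix entry `R̄(u)_{(ε₁,ε₂),(ε₁',ε₂')}`. -/
def Rbar (τ : ℂ) (r : ℝ) (u : ℂ) (e1 e2 e1' e2' : ℤ) : ℂ :=
  if e1' = e1 ∧ e2' = e2 ∧ e1 = e2 then aw τ r u
  else if e1' = e1 ∧ e2' = e2 ∧ e1 = -e2 then bw τ r u
  else if e1' = e2 ∧ e2' = e1 ∧ e1 = -e2 then cw τ r u
  else if e1' = -e1 ∧ e2' = -e2 ∧ e1 = e2 then dw τ r u
  else 0

/-- Sklyanin standard-basis vector `v_+(z)`. -/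
def vp (τ z : ℂ) : ℂ := th3 (2 * z) (2 * τ) - th2 (2 * z) (2 * τ)

/-- Sklyanin standard-basis vector `v_-(z)`. -/
def vm (τ z : ℂ) : ℂ := th3 (2 * z) (2 * τ) + th2 (2 * z) (2 * τ)

/-!
By the Jacobi triple product, `ϑ0(x) ϑ3(y) - ϑ3(x) ϑ0(y)` is a constant times a product of the two
brackets of the half sum and the half difference of the arguments. Hence every entry of the
unfused `L`-matrix is an explicit ratio of brackets, and the Plücker relation between such
determinants is Weierstrass' three-term relation for the bracket. The three-term relation gives
the Yang–Baxter relation for a single face, and exchange relations saying that two adjacent faces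
do not distinguish the boundary paths `a, a + 1, a` and `a, a - 1, a`. Because of the latter a
fused row may be evaluated along any boundary path, so the one-face relation can be pushed
through `k` columns; a fused row turned by a quarter satisfies the same exchange relation, so the
resulting relation can be pushed through `l` rows.
-/

/-! ### Fusion of face weights -/

section Fusion

variable {S R : Type*} [AddCommGroupWithOne S] [CommSemiring R]

/-- Neighbouring heights of a face model. -/
def Adj (a b : ℤ) : Prop := b = a + 1 ∨ b = a - 1

/-- Every height at distance at most `n` from `h` lies in the window `(0, M)` to which all sums
over heights are truncated. -/
def Interior (M : ℤ) (n : ℕ) (h : ℤ) : Prop := (n : ℤ) < h ∧ h + n < M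

/-- Weights of a square face with corners ordered (NW, NE, SW, SE), depending on a spectral
parameter in `S`. -/
abbrev FaceWeight (S R : Type*) := S → ℤ → ℤ → ℤ → ℤ → R

/-- The weight vanishes unless its two top heights are neighbours. -/
def TopAdj (X : FaceWeight S R) : Prop := ∀ w a b d c, ¬ Adj a b → X w a b d c = 0

/-- The weight vanishes unless its two bottom heights are neighbours. -/
def BottomAdj (X : FaceWeight S R) : Prop := ∀ w a b d c, ¬ Adj d c → X w a b d c = 0

/-- The weight vanishes unless both its left and its right heights are neighbours. -/
def SideAdj (X : FaceWeight S R) : Prop :=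
  ∀ w a b d c, ¬ (Adj a d ∧ Adj b c) → X w a b d c = 0

/-- Two horizontally adjacent faces give the same weight for the top paths `a, a + 1, a` and
`a, a - 1, a`; this is what makes horizontal fusion independent of the top path. -/
def TopExchange (M : ℤ) (m : ℕ) (X : FaceWeight S R) : Prop :=
  ∀ w a d c, Interior M m a → Interior M m d →
    ∑ d₁ ∈ Ioo 0 M, X (w + 1) a (a + 1) d d₁ * X w (a + 1) a d₁ c =
      ∑ d₁ ∈ Ioo 0 M, X (w + 1) a (a - 1) d d₁ * X w (a - 1) a d₁ c

/-- Two vertically adjacent faces give the same weight for the right paths `e, e + 1, e` and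
`e, e - 1, e`; the vertical counterpart of `TopExchange`. -/
def RightExchange (M : ℤ) (X : FaceWeight S R) : Prop :=
  ∀ w h₀ h₂ e, Interior M 1 h₀ →
    ∑ h₁ ∈ Ioo 0 M, X w h₀ e h₁ (e + 1) * X (w + 1) h₁ (e + 1) h₂ e =
      ∑ h₁ ∈ Ioo 0 M, X w h₀ e h₁ (e - 1) * X (w + 1) h₁ (e - 1) h₂ e

/-- The first step from `a` towards `b` on the canonical path with `n + 1` steps, which goes up
as long as it can. -/
def firstStep (n : ℕ) (a b : ℤ) : ℤ := if adm n (a + 1) b then a + 1 else a - 1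

/-- The weight of a row of `n` faces with spectral parameters `u + n - 1, …, u`, with the
canonical path from `a` to `b` on top and summed over the bottom paths from `d` to `c`. -/
def fusedRow (M : ℤ) (X : FaceWeight S R) (u : S) : ℕ → ℤ → ℤ → ℤ → ℤ → R
  | 0, a, b, d, c => if a = b ∧ d = c then 1 else 0
  | n + 1, a, b, d, c =>
    if adm (n + 1) a b then
      ∑ d₁ ∈ Ioo 0 M,
        X (u + n) a (firstStep n a b) d d₁ * fusedRow M X u n (firstStep n a b) b d₁ c
    else 0

variable {M : ℤ} {X Z : FaceWeight S R} {u v w : S} {m n : ℕ} {a b c d e f h : ℤ}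

lemma Adj.symm (hab : Adj a b) : Adj b a := by
  unfold Adj at *; lia

lemma Interior.mono (ha : Interior M n a) (hmn : m ≤ n) : Interior M m a := by
  unfold Interior at *; lia

lemma Interior.of_natAbs_le (ha : Interior M n a) (hab : (b - a).natAbs + m ≤ n) :
    Interior M m b := by
  unfold Interior at *; lia

lemma Interior.of_adj (ha : Interior M n a) (hab : Adj a b) (hmn : m + 1 ≤ n) :
    Interior M m b :=
  ha.of_natAbs_le (by unfold Adj at hab; lia)

lemma Interior.mem_Ioo (ha : Interior M n a) : a ∈ Ioo 0 M := by
  rw [Finset.mem_Ioo]; unfold Interior at ha; lia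

lemma TopExchange.mono (hX : TopExchange M m X) (hmn : m ≤ n) : TopExchange M n X :=
  fun w a d c ha hd => hX w a d c (ha.mono hmn) (hd.mono hmn)

lemma adm_zero : adm 0 a b ↔ a = b := by
  unfold adm; lia

lemma adm_succ_of_adj (hab : Adj a b) (hbc : adm n b c) : adm (n + 1) a c := by
  unfold adm Adj at *; lia

lemma adm.of_succ_of_pred (hup : adm (n + 1) (a + 1) b) (hdown : adm (n + 1) (a - 1) b) :
    adm n a b := by
  unfold adm at *; lia

lemma adj_firstStep (n : ℕ) (a b : ℤ) : Adj a (firstStep n a b) := by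
  unfold firstStep Adj; split_ifs <;> simp

lemma adm_firstStep (hab : adm (n + 1) a b) : adm n (firstStep n a b) b := by
  unfold firstStep
  split_ifs with hup
  · exact hup
  · unfold adm at *; lia

lemma fusedRow_succ (hab : adm (n + 1) a b) :
    fusedRow M X u (n + 1) a b d c = ∑ d₁ ∈ Ioo 0 M,
      X (u + n) a (firstStep n a b) d d₁ * fusedRow M X u n (firstStep n a b) b d₁ c := by
  rw [fusedRow, if_pos hab]

lemma fusedRow_eq_zero_of_not_adm_top (hab : ¬ adm n a b) : fusedRow M X u n a b d c = 0 := by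
  cases n with
  | zero => exact if_neg fun h => hab (adm_zero.2 h.1)
  | succ n => exact if_neg hab

lemma fusedRow_eq_zero_of_not_adm_bottom (hX : BottomAdj X) (hdc : ¬ adm n d c) :
    fusedRow M X u n a b d c = 0 := by
  induction n generalizing a d with
  | zero => exact if_neg fun h => hdc (adm_zero.2 h.2)
  | succ n ih =>
    by_cases hab : adm (n + 1) a b
    · rw [fusedRow_succ hab]
      refine sum_eq_zero fun d₁ _ => ?_
      by_cases hd : Adj d d₁
      · rw [ih fun h => hdc (adm_succ_of_adj hd h), mul_zero]
      · rw [hX _ _ _ _ _ hd, zero_mul]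
    · exact fusedRow_eq_zero_of_not_adm_top hab

lemma fusedRow_eq_zero_of_not_adj_left (hX : SideAdj X) (hn : n = 0 → Adj b c)
    (had : ¬ Adj a d) : fusedRow M X u n a b d c = 0 := by
  cases n with
  | zero =>
    refine if_neg ?_
    rintro ⟨rfl, rfl⟩
    exact had (hn rfl)
  | succ n =>
    by_cases hab : adm (n + 1) a b
    · rw [fusedRow_succ hab]
      exact sum_eq_zero fun d₁ _ => by rw [hX _ _ _ _ _ fun h => had h.1, zero_mul]
    · exact fusedRow_eq_zero_of_not_adm_top hab

lemma fusedRow_comp_sub (v : S) :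
    fusedRow M (fun w => X (w - v)) u n a b d c = fusedRow M X (u - v) n a b d c := by
  induction n generalizing a d with
  | zero => rfl
  | succ n ih => simp only [fusedRow, ih, add_sub_right_comm]

lemma sum_face_mul_fusedRow_succ_of_return
    (hX : BottomAdj X) {a₁ : ℤ}
    (hstep : ∀ d₁, Adj d d₁ → fusedRow M X u (n + 1) a₁ b d₁ c =
      ∑ d₂ ∈ Ioo 0 M, X (u + n) a₁ a d₁ d₂ * fusedRow M X u n a b d₂ c) :
    ∑ d₁ ∈ Ioo 0 M, X w a a₁ d d₁ * fusedRow M X u (n + 1) a₁ b d₁ c =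
      ∑ d₂ ∈ Ioo 0 M, (∑ d₁ ∈ Ioo 0 M, X w a a₁ d d₁ * X (u + n) a₁ a d₁ d₂) *
        fusedRow M X u n a b d₂ c := by
  simp_rw [sum_mul]
  rw [sum_comm]
  refine sum_congr rfl fun d₁ _ => ?_
  by_cases hd : Adj d d₁
  · rw [hstep d₁ hd, mul_sum]
    exact sum_congr rfl fun d₂ _ => (mul_assoc _ _ _).symm
  · simp [hX _ _ _ _ _ hd]

lemma fusedRow_succ_of_adj (hX : BottomAdj X) (eX : TopExchange M m X) {a₁ : ℤ}
    (haa₁ : Adj a a₁) (hab : adm n a₁ b) (ha : Interior M (n + m) a)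
    (hd : Interior M (n + m) d) :
    fusedRow M X u (n + 1) a b d c =
      ∑ d₁ ∈ Ioo 0 M, X (u + n) a a₁ d d₁ * fusedRow M X u n a₁ b d₁ c := by
  induction n generalizing a b d c a₁ with
  | zero =>
    obtain rfl := adm_zero.1 hab
    have hfirst : firstStep 0 a a₁ = a₁ :=
      adm_zero.1 (adm_firstStep (adm_succ_of_adj haa₁ hab))
    rw [fusedRow_succ (adm_succ_of_adj haa₁ hab), hfirst]
  | succ n ih =>
    have through {a' : ℤ} (ha' : Adj a a') (hab : adm n a b) :=
      sum_face_mul_fusedRow_succ_of_return (u := u) (w := u + n + 1) (b := b) (c := c) hX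
        (fun d₁ hd₁ => ih (c := c) ha'.symm hab (ha.of_adj ha' (by lia)) (hd.of_adj hd₁ (by lia)))
    rw [fusedRow_succ (adm_succ_of_adj haa₁ hab)]
    unfold firstStep
    split_ifs with hup <;> rcases haa₁ with rfl | rfl
    · rfl
    · have hab' := hup.of_succ_of_pred hab
      simp only [Nat.cast_succ, ← add_assoc]
      rw [through (Or.inl rfl) hab', through (Or.inr rfl) hab']
      simp only [eX (u + n) a d _ (ha.mono (by lia)) (hd.mono (by lia))]
    · exact absurd hab hup
    · rfl

lemma fusedRow_succ_mul_fusedRow_succ (hX : BottomAdj X) (hZ : BottomAdj Z)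
    (eZ : TopExchange M m Z) (hab : adm (n + 1) a b) (hd : Interior M (n + m) d)
    (hf : Interior M (n + m) f) :
    fusedRow M X u (n + 1) a b d c * fusedRow M Z v (n + 1) d c f e =
      ∑ d₁ ∈ Ioo 0 M, ∑ f₁ ∈ Ioo 0 M,
        (X (u + n) a (firstStep n a b) d d₁ * Z (v + n) d d₁ f f₁) *
          (fusedRow M X u n (firstStep n a b) b d₁ c * fusedRow M Z v n d₁ c f₁ e) := by
  rw [fusedRow_succ hab, sum_mul]
  refine sum_congr rfl fun d₁ _ => ?_
  by_cases hd₁ : Adj d d₁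
  swap; · simp [hX _ _ _ _ _ hd₁]
  by_cases hd₁c : adm n d₁ c
  swap; · simp [fusedRow_eq_zero_of_not_adm_bottom hX hd₁c]
  rw [fusedRow_succ_of_adj hZ eZ hd₁ hd₁c hd hf, mul_sum]
  exact sum_congr rfl fun f₁ _ => mul_mul_mul_comm _ _ _ _

lemma sum_mul_fusedRow_succ_mul_fusedRow_succ {V : ℤ → R} (hX : BottomAdj X)
    (hZ : BottomAdj Z) (eZ : TopExchange M m Z) (hab : adm (n + 1) a b)
    (hV : ∀ d, V d ≠ 0 → Interior M (n + m) d) (hf : Interior M (n + m) f) :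
    ∑ d ∈ Ioo 0 M, V d * (fusedRow M X u (n + 1) a b d c * fusedRow M Z v (n + 1) d c f e) =
      ∑ d₁ ∈ Ioo 0 M, ∑ f₁ ∈ Ioo 0 M,
        (∑ d ∈ Ioo 0 M, V d * (X (u + n) a (firstStep n a b) d d₁ * Z (v + n) d d₁ f f₁)) *
          (fusedRow M X u n (firstStep n a b) b d₁ c * fusedRow M Z v n d₁ c f₁ e) := by
  simp only [sum_mul]
  rw [sum_comm_cycle]
  refine sum_congr rfl fun d _ => ?_
  by_cases hVd : V d = 0
  · simp [hVd]
  · simp only [fusedRow_succ_mul_fusedRow_succ hX hZ eZ hab (hV d hVd) hf, mul_sum, mul_assoc]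

lemma sum_fusedRow_succ_mul_fusedRow_succ_mul {V : ℤ → R} (hX : BottomAdj X)
    (hZ : BottomAdj Z) (eZ : TopExchange M m Z) (hab : adm (n + 1) a b)
    (hd : Interior M (n + m) d) (hf : Interior M (n + m) f) :
    ∑ c ∈ Ioo 0 M, fusedRow M X u (n + 1) a b d c * fusedRow M Z v (n + 1) d c f e * V c =
      ∑ d₁ ∈ Ioo 0 M, ∑ f₁ ∈ Ioo 0 M,
        (X (u + n) a (firstStep n a b) d d₁ * Z (v + n) d d₁ f f₁) *
          ∑ c ∈ Ioo 0 M,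
            fusedRow M X u n (firstStep n a b) b d₁ c * fusedRow M Z v n d₁ c f₁ e * V c := by
  simp only [fusedRow_succ_mul_fusedRow_succ hX hZ eZ hab hd hf, sum_mul, mul_sum, ← mul_assoc]
  rw [sum_comm_cycle, sum_comm_cycle]

lemma fusedRow_intertwine {p N : ℕ} {V : ℤ → ℤ → ℤ → ℤ → R} (hX : BottomAdj X)
    (hZ : BottomAdj Z) (eX : TopExchange M p X) (eZ : TopExchange M p Z) (hpm : p ≤ m)
    (hNm : N + p ≤ m + 1)
    (hV : ∀ a d g f, V a d g f ≠ 0 → (d - a).natAbs ≤ N ∨ (d - f).natAbs ≤ N)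
    (hcolumn : ∀ w a b g f c e, Adj a b → Interior M m a → Interior M m g → Interior M m f →
      ∑ d ∈ Ioo 0 M, V a d g f * (X w a b d c * Z w d c f e) =
        ∑ d ∈ Ioo 0 M, Z w a b g d * X w g d f e * V b c d e)
    {g : ℤ} (ha : Interior M (n + m) a) (hg : Interior M (n + m) g)
    (hf : Interior M (n + m) f) (hc : c ∈ Ioo 0 M) :
    ∑ d ∈ Ioo 0 M, V a d g f * (fusedRow M X u n a b d c * fusedRow M Z u n d c f e) =
      ∑ d ∈ Ioo 0 M, fusedRow M Z u n a b g d * fusedRow M X u n g d f e * V b c d e := by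
  induction n generalizing a b g f e with
  | zero =>
    rw [sum_eq_single_of_mem c hc fun d _ hd => by simp [fusedRow, hd],
      sum_eq_single_of_mem g hg.mem_Ioo fun d _ hd => by simp [fusedRow, hd.symm]]
    by_cases hab : a = b <;> by_cases hfe : f = e <;> simp [fusedRow, hab, hfe]
  | succ n ih =>
    by_cases hab : adm (n + 1) a b
    swap; · simp [fusedRow_eq_zero_of_not_adm_top hab]
    set a₁ := firstStep n a b
    have haa₁ : Adj a a₁ := adj_firstStep n a b
    have interior_of_ne_zero (d) (hd : V a d g f ≠ 0) : Interior M (n + p) d := by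
      rcases hV _ _ _ _ hd with h | h
      exacts [ha.of_natAbs_le (by lia), hf.of_natAbs_le (by lia)]
    calc ∑ d ∈ Ioo 0 M, V a d g f *
          (fusedRow M X u (n + 1) a b d c * fusedRow M Z u (n + 1) d c f e)
        = ∑ d₁ ∈ Ioo 0 M, ∑ f₁ ∈ Ioo 0 M,
            (∑ d ∈ Ioo 0 M, V a d g f * (X (u + n) a a₁ d d₁ * Z (u + n) d d₁ f f₁)) *
              (fusedRow M X u n a₁ b d₁ c * fusedRow M Z u n d₁ c f₁ e) :=
          sum_mul_fusedRow_succ_mul_fusedRow_succ hX hZ eZ hab interior_of_ne_zero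
            (hf.mono (by lia))
      _ = ∑ d₁ ∈ Ioo 0 M, ∑ f₁ ∈ Ioo 0 M,
            (∑ g₁ ∈ Ioo 0 M, Z (u + n) a a₁ g g₁ * X (u + n) g g₁ f f₁ * V a₁ d₁ g₁ f₁) *
              (fusedRow M X u n a₁ b d₁ c * fusedRow M Z u n d₁ c f₁ e) := by
          simp only [hcolumn _ _ _ _ _ _ _ haa₁ (ha.mono (by lia)) (hg.mono (by lia))
            (hf.mono (by lia))]
      _ = ∑ g₁ ∈ Ioo 0 M, ∑ f₁ ∈ Ioo 0 M, (Z (u + n) a a₁ g g₁ * X (u + n) g g₁ f f₁) *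
            ∑ d₁ ∈ Ioo 0 M, V a₁ d₁ g₁ f₁ *
              (fusedRow M X u n a₁ b d₁ c * fusedRow M Z u n d₁ c f₁ e) := by
          simp only [sum_mul, mul_sum, mul_assoc]
          rw [sum_comm_cycle]
          exact sum_congr rfl fun g₁ _ => sum_comm
      _ = ∑ g₁ ∈ Ioo 0 M, ∑ f₁ ∈ Ioo 0 M, (Z (u + n) a a₁ g g₁ * X (u + n) g g₁ f f₁) *
            ∑ d ∈ Ioo 0 M,
              fusedRow M Z u n a₁ b g₁ d * fusedRow M X u n g₁ d f₁ e * V b c d e := by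
          refine sum_congr rfl fun g₁ _ => sum_congr rfl fun f₁ _ => ?_
          by_cases hg₁ : Adj g g₁
          swap; · simp [hZ _ _ _ _ _ hg₁]
          by_cases hf₁ : Adj f f₁
          swap; · simp [hX _ _ _ _ _ hf₁]
          rw [ih (ha.of_adj haa₁ (by lia)) (hg.of_adj hg₁ (by lia)) (hf.of_adj hf₁ (by lia))]
      _ = ∑ d ∈ Ioo 0 M,
            fusedRow M Z u (n + 1) a b g d * fusedRow M X u (n + 1) g d f e * V b c d e :=
          (sum_fusedRow_succ_mul_fusedRow_succ_mul hZ hX eX hab (hg.mono (by lia))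
            (hf.mono (by lia))).symm

lemma sum_fusedRow_zero_mul_fusedRow_zero (ha : Interior M 1 a) (had : Adj e d) :
    ∑ a₁ ∈ Ioo 0 M, fusedRow M X u 0 a e a₁ d * fusedRow M X v 0 a₁ d f e =
      if a = e ∧ f = e then 1 else 0 := by
  by_cases hae : a = e
  · subst hae
    rw [sum_eq_single_of_mem d (ha.of_adj had le_rfl).mem_Ioo fun a₁ _ h => by
      simp [fusedRow, h]]
    simp [fusedRow]
  · simp [fusedRow, hae]

lemma sum_column_eq_of_adj (hX : RightExchange M X) {a' m₁ c₁ : ℤ} (ha : Interior M 1 a)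
    (hm₁ : Adj a' m₁) (hc₁ : Adj m₁ c₁) :
    ∑ a₁ ∈ Ioo 0 M, X w a a' a₁ m₁ * X (w + 1) a₁ m₁ f c₁ =
      ∑ a₁ ∈ Ioo 0 M, X w a a' a₁ (if c₁ = a' - 2 then a' - 1 else a' + 1) *
        X (w + 1) a₁ (if c₁ = a' - 2 then a' - 1 else a' + 1) f c₁ := by
  rcases hm₁ with rfl | rfl <;> rcases hc₁ with rfl | rfl
  · rw [if_neg (by lia)]
  · rw [if_neg (by lia)]
  · rw [if_neg (by lia), show a' - 1 + 1 = a' by ring]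
    exact (hX w a f a' ha).symm
  · rw [if_pos (by ring)]

lemma fusedRow_succ_mul_fusedRow_succ_of_sideAdj (hX : BottomAdj X) (eX : TopExchange M 1 X)
    (sX : SideAdj X) {m₁ a₁ : ℤ} (hm₁ : Adj e m₁) (hae : adm (n + 1) a e)
    (ha : Interior M (n + 3) a) :
    fusedRow M X w (n + 1) a e a₁ m₁ * fusedRow M X (w + 1) (n + 1) a₁ m₁ f e =
      ∑ b₁ ∈ Ioo 0 M, ∑ c₁ ∈ Ioo 0 M,
        (X (w + n) a (firstStep n a e) a₁ b₁ * X (w + n + 1) a₁ b₁ f c₁) *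
          (fusedRow M X w n (firstStep n a e) e b₁ m₁ * fusedRow M X (w + 1) n b₁ m₁ c₁ e) := by
  by_cases haa₁ : Adj a a₁
  swap
  · rw [fusedRow_eq_zero_of_not_adj_left sX (fun _ => hm₁) haa₁]
    simp [sX _ _ _ _ _ fun h => haa₁ h.1]
  by_cases ha₁f : Adj a₁ f
  swap
  · rw [fusedRow_eq_zero_of_not_adj_left sX (fun _ => hm₁.symm) ha₁f]
    simp [sX _ _ _ _ _ fun h => ha₁f h.1]
  have ha₁ : Interior M (n + 2) a₁ := ha.of_adj haa₁ (by lia)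
  rw [fusedRow_succ_mul_fusedRow_succ hX hX eX hae (ha₁.mono (by lia))
    (ha₁.of_adj ha₁f (by lia)), add_right_comm w 1]

lemma exists_sum_fusedRow_succ_mul_fusedRow_succ_eq (hX : BottomAdj X)
    (eX : TopExchange M 1 X) (sX : SideAdj X) (rX : RightExchange M X)
    (hae : adm (n + 1) a e) (ha : Interior M (n + 3) a) :
    ∃ B : ℤ → R, ∀ m₁, Adj e m₁ →
      ∑ a₁ ∈ Ioo 0 M, fusedRow M X w (n + 1) a e a₁ m₁ * fusedRow M X (w + 1) (n + 1) a₁ m₁ f e =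
        ∑ c₁ ∈ Ioo 0 M, B c₁ * ∑ b₁ ∈ Ioo 0 M,
          fusedRow M X w n (firstStep n a e) e b₁ m₁ * fusedRow M X (w + 1) n b₁ m₁ c₁ e := by
  set a' := firstStep n a e
  let mid (c₁ : ℤ) : ℤ := if c₁ = a' - 2 then a' - 1 else a' + 1
  refine ⟨fun c₁ => ∑ a₁ ∈ Ioo 0 M,
    X (w + n) a a' a₁ (mid c₁) * X (w + n + 1) a₁ (mid c₁) f c₁, fun m₁ hm₁ => ?_⟩
  simp only [fusedRow_succ_mul_fusedRow_succ_of_sideAdj hX eX sX hm₁ hae ha]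
  rw [← sum_comm_cycle, sum_comm]
  refine sum_congr rfl fun c₁ _ => ?_
  rw [mul_sum]
  refine sum_congr rfl fun b₁ _ => ?_
  rw [← sum_mul]
  by_cases hb₁ : Adj a' b₁
  swap; · simp [fusedRow_eq_zero_of_not_adj_left sX (fun _ => hm₁) hb₁, a']
  by_cases hc₁ : Adj b₁ c₁
  swap; · simp [fusedRow_eq_zero_of_not_adj_left sX (fun _ => hm₁.symm) hc₁]
  rw [sum_column_eq_of_adj rX (ha.mono (by lia)) hb₁ hc₁]

lemma sum_fusedRow_mul_fusedRow_eq_of_adj (hX : BottomAdj X) (eX : TopExchange M 1 X)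
    (sX : SideAdj X) (rX : RightExchange M X) {m₁ m₂ : ℤ} (hm₁ : Adj e m₁) (hm₂ : Adj e m₂)
    (ha : Interior M (n + 2) a) :
    ∑ a₁ ∈ Ioo 0 M, fusedRow M X w n a e a₁ m₁ * fusedRow M X (w + 1) n a₁ m₁ f e =
      ∑ a₁ ∈ Ioo 0 M, fusedRow M X w n a e a₁ m₂ * fusedRow M X (w + 1) n a₁ m₂ f e := by
  induction n generalizing a f with
  | zero =>
    rw [sum_fusedRow_zero_mul_fusedRow_zero (ha.mono (by lia)) hm₁,
      sum_fusedRow_zero_mul_fusedRow_zero (ha.mono (by lia)) hm₂]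
  | succ n ih =>
    by_cases hae : adm (n + 1) a e
    · obtain ⟨B, hB⟩ := exists_sum_fusedRow_succ_mul_fusedRow_succ_eq (w := w) (f := f)
        hX eX sX rX hae ha
      rw [hB m₁ hm₁, hB m₂ hm₂]
      simp only [ih (ha.of_adj (adj_firstStep n a e) (by lia))]
    · simp [fusedRow_eq_zero_of_not_adm_top hae]

/-- The fused row read as a face weight by columns: turned by a quarter, with the spectral
parameter reversed. -/
def turnedFusedRow (M : ℤ) (X : FaceWeight S R) (k : ℕ) (u : S) : FaceWeight S R :=
  fun w b c a d => fusedRow M X (u - w) k a b d c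

variable {W L : FaceWeight S R} {k l : ℕ} {g : ℤ}

lemma bottomAdj_turnedFusedRow (sX : SideAdj X) (hk : 1 ≤ k) :
    BottomAdj (turnedFusedRow M X k u) :=
  fun _ _ _ _ _ => fusedRow_eq_zero_of_not_adj_left sX (by lia)

lemma topExchange_turnedFusedRow (hX : BottomAdj X) (eX : TopExchange M 1 X) (sX : SideAdj X)
    (rX : RightExchange M X) : TopExchange M (k + 2) (turnedFusedRow M X k u) := by
  intro w e a f _ ha
  simp only [turnedFusedRow]
  have hshift : u - w = u - (w + 1) + 1 := by abel
  rw [hshift]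
  exact sum_fusedRow_mul_fusedRow_eq_of_adj hX eX sX rX (Or.inl rfl) (Or.inr rfl) ha

/-- `W` intertwines the columns of `L` on heights in the window `(0, M)`. -/
def IsIntertwiner (M : ℤ) (W L : FaceWeight S R) : Prop :=
  ∀ u v a b g f c e, Adj a b → Interior M 1 a → Interior M 1 g → Interior M 1 f →
    ∑ d ∈ Ioo 0 M, L v a d g f * (W (u - v) a b d c * L u d c f e) =
      ∑ d ∈ Ioo 0 M, L u a b g d * W (u - v) g d f e * L v b c d e

lemma sum_mul_fusedRow_mul_fusedRow (hW : BottomAdj W) (eW : TopExchange M 1 W)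
    (tL : TopAdj L) (hL : BottomAdj L) (eL : TopExchange M 1 L) (hWL : IsIntertwiner M W L)
    (ha : Interior M (k + 1) a) (hg : Interior M (k + 1) g) (hf : Interior M (k + 1) f)
    (hc : c ∈ Ioo 0 M) :
    ∑ d ∈ Ioo 0 M, L v a d g f * (fusedRow M W (u - v) k a b d c * fusedRow M L u k d c f e) =
      ∑ d ∈ Ioo 0 M, fusedRow M L u k a b g d * fusedRow M W (u - v) k g d f e * L v b c d e := by
  have eW' : TopExchange M 1 fun w => W (w - v) := fun w => by
    simpa only [add_sub_right_comm] using eW (w - v)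
  have hsupp (a d g f) (h : L v a d g f ≠ 0) : (d - a).natAbs ≤ 1 ∨ (d - f).natAbs ≤ 1 := by
    have had : Adj a d := not_not.1 fun hn => h (tL _ _ _ _ _ hn)
    unfold Adj at had
    lia
  simpa only [fusedRow_comp_sub] using
    fusedRow_intertwine (X := fun w => W (w - v)) (V := L v) (N := 1) (b := b) (e := e) (u := u)
      (fun _ => hW _) hL eW' eL le_rfl le_rfl hsupp (fun w => hWL w v) ha hg hf hc

lemma turnedFusedRow_column (hk : 1 ≤ k) (hW : BottomAdj W) (eW : TopExchange M 1 W)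
    (sW : SideAdj W) (tL : TopAdj L) (hL : BottomAdj L) (eL : TopExchange M 1 L)
    (hWL : IsIntertwiner M W L) (hbc : Adj b c) (hb : Interior M 1 b)
    (ha : Interior M (k + 1) a) (hg : Interior M (k + 2) g) :
    ∑ d ∈ Ioo 0 M, fusedRow M L u k a b g d * (L w b c d e * turnedFusedRow M W k u w d e g f) =
      ∑ d ∈ Ioo 0 M, turnedFusedRow M W k u w b c a d * L w a d g f *
        fusedRow M L u k d c f e := by
  by_cases hgf : Adj g f
  swap; · simp [hL _ _ _ _ _ hgf, bottomAdj_turnedFusedRow sW hk _ _ _ _ _ hgf]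
  have hfused := sum_mul_fusedRow_mul_fusedRow (b := b) (e := e) (u := u) (v := w) hW eW tL hL eL
    hWL ha (hg.mono (by lia)) (hg.of_adj hgf le_rfl) (hb.of_adj hbc le_rfl).mem_Ioo
  simp only [turnedFusedRow]
  convert hfused.symm using 2 <;> ring

theorem fused_yang_baxter (hk : 1 ≤ k) (hl : 1 ≤ l) (hW : BottomAdj W)
    (eW : TopExchange M 1 W) (sW : SideAdj W) (rW : RightExchange M W) (tL : TopAdj L)
    (hL : BottomAdj L) (eL : TopExchange M 1 L) (hWL : IsIntertwiner M W L)
    (ha : Interior M (2 * k + 2 * l) a) (hb : Interior M (2 * k + 2 * l) b)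
    (hg : Interior M (2 * k + 2 * l) g) (he : e ∈ Ioo 0 M) :
    ∑ d ∈ Ioo 0 M, fusedRow M (turnedFusedRow M W k u) v l b c a d *
        fusedRow M L u k d c f e * fusedRow M L v l a d g f =
      ∑ d ∈ Ioo 0 M, fusedRow M L u k a b g d * fusedRow M L v l b c d e *
        fusedRow M (turnedFusedRow M W k u) v l d e g f := by
  have hsupp (a d g f) (h : fusedRow M L u k g a f d ≠ 0) :
      (d - a).natAbs ≤ k ∨ (d - f).natAbs ≤ k := by
    have hfd : adm k f d := not_not.1 fun hn => h (fusedRow_eq_zero_of_not_adm_bottom hL hn)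
    unfold adm at hfd
    lia
  have hfused := fusedRow_intertwine (X := L) (Z := turnedFusedRow M W k u)
    (V := fun b d a f => fusedRow M L u k a b f d) (b := c) (c := e) (e := f) (u := v) (n := l)
    (m := 2 * k + 1) (p := k + 2) (N := k) hL
    (bottomAdj_turnedFusedRow sW hk) (eL.mono (by lia)) (topExchange_turnedFusedRow hW eW sW rW)
    (by lia) (by lia) hsupp
    (fun w b c a g e f hbc hb ha hg => turnedFusedRow_column hk hW eW sW tL hL eL hWL hbc
      (hb.mono (by lia)) (ha.mono (by lia)) (hg.mono (by lia)))
    (hb.mono (by lia)) (ha.mono (by lia)) (hg.mono (by lia)) he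
  convert hfused.symm using 2 <;> ring

end Fusion
/-! ### Jacobi triple product -/

section TripleProduct

open Filter Topology

variable {p : ℂ}

/-- The finite product `(p; p)_m = (1 - p)(1 - p²)⋯(1 - p^m)`. -/
def qPochhammer (p : ℂ) (m : ℕ) : ℂ := ∏ j ∈ range m, (1 - p ^ (j + 1))

/-- The inverse `1 / (p; p)_m`, extended to negative `m` by zero so that the recurrence
`invQPochhammer_sub_one` holds on all of `ℤ`. -/
def invQPochhammer (p : ℂ) : ℤ → ℂ
  | (m : ℕ) => (qPochhammer p m)⁻¹
  | Int.negSucc _ => 0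

/-- The Gaussian binomial coefficient `2N choose N + n`, which is zero for `|n| > N`. -/
def centralQBinom (p : ℂ) (N : ℕ) (n : ℤ) : ℂ :=
  qPochhammer p (2 * N) * invQPochhammer p (N + n) * invQPochhammer p (N - n)

lemma qPochhammer_succ (p : ℂ) (m : ℕ) :
    qPochhammer p (m + 1) = qPochhammer p m * (1 - p ^ (m + 1)) :=
  prod_range_succ _ _

lemma one_sub_pow_succ_ne_zero (hp : ‖p‖ < 1) (j : ℕ) : 1 - p ^ (j + 1) ≠ 0 := by
  refine sub_ne_zero.mpr fun h => ?_
  have : ‖p ^ (j + 1)‖ < 1 := by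
    rw [norm_pow]
    exact pow_lt_one₀ (norm_nonneg p) hp j.succ_ne_zero
  simp [← h] at this

lemma invQPochhammer_sub_one (hp : ‖p‖ < 1) (m : ℤ) :
    invQPochhammer p (m - 1) = (1 - p ^ m) * invQPochhammer p m := by
  match m with
  | Int.negSucc n => simp [invQPochhammer, Int.negSucc_sub_one]
  | 0 => simpa using show invQPochhammer p (Int.negSucc 0) = 0 from rfl
  | (n + 1 : ℕ) =>
    rw [show ((n + 1 : ℕ) : ℤ) - 1 = n by push_cast; ring, zpow_natCast]
    simp only [invQPochhammer, qPochhammer_succ, mul_inv]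
    field_simp [one_sub_pow_succ_ne_zero hp n]

lemma centralQBinom_zero (p : ℂ) (n : ℤ) : centralQBinom p 0 n = if n = 0 then 1 else 0 := by
  rcases n with (_ | n) | n
  · simp [centralQBinom, invQPochhammer, qPochhammer]
  · have : -((n : ℤ) + 1) = Int.negSucc n := rfl
    simp [centralQBinom, this, invQPochhammer, show (n : ℤ) + 1 ≠ 0 by lia]
  · simp [centralQBinom, invQPochhammer]

lemma centralQBinom_succ (hp : ‖p‖ < 1) (hp0 : p ≠ 0) (N : ℕ) (n : ℤ) :
    centralQBinom p (N + 1) n = (1 + p ^ (2 * N + 1)) * centralQBinom p N n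
      + p * p ^ N / p ^ n * centralQBinom p N (n - 1)
      + p * p ^ N * p ^ n * centralQBinom p N (n + 1) := by
  have lower (m m' : ℤ) (hm : m = m' - 1) :
      invQPochhammer p m = (1 - p ^ m') * invQPochhammer p m' :=
    hm ▸ invQPochhammer_sub_one hp m'
  have hX : p ^ n ≠ 0 := zpow_ne_zero n hp0
  have key : qPochhammer p (2 * (N + 1)) =
      qPochhammer p (2 * N) * (1 - p * (p ^ N) ^ 2) * (1 - p ^ 2 * (p ^ N) ^ 2) := by
    rw [show 2 * (N + 1) = 2 * N + 1 + 1 by ring, qPochhammer_succ, qPochhammer_succ]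
    ring
  simp only [centralQBinom]
  rw [key, show (N : ℤ) - (n - 1) = N + 1 - n by ring, show (N : ℤ) + (n + 1) = N + 1 + n by ring,
    lower (N + (n - 1)) (N + n) (by ring), lower (N - (n + 1)) (N - n) (by ring),
    lower (N + n) (N + 1 + n) (by ring), lower (N - n) (N + 1 - n) (by ring)]
  push_cast
  simp only [zpow_add₀ hp0, zpow_sub₀ hp0, zpow_one, zpow_natCast]
  rw [show p ^ (2 * N + 1) = p * (p ^ N) ^ 2 by ring]
  field_simp
  ring

lemma hasSum_mul_centralQBinom {E : ℤ → ℂ} {z : ℂ} (hp : ‖p‖ < 1) (hp0 : p ≠ 0) (hz : z ≠ 0)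
    (hE0 : E 0 = 1) (hE : ∀ n, E (n + 1) = -z * p ^ n * E n) (N : ℕ) :
    HasSum (fun n => E n * centralQBinom p N n)
      (∏ j ∈ range N, ((1 - z * p ^ j) * (1 - p ^ (j + 1) / z))) := by
  induction N with
  | zero =>
    refine (hasSum_ite_eq (0 : ℤ) (1 : ℂ)).congr_fun fun n => ?_
    by_cases hn : n = 0 <;> simp [centralQBinom_zero, hn, hE0]
  | succ N ih =>
    have down := (Equiv.subRight (1 : ℤ)).hasSum_iff.mpr ih
    have up := (Equiv.addRight (1 : ℤ)).hasSum_iff.mpr ih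
    have total : ∏ j ∈ range (N + 1), ((1 - z * p ^ j) * (1 - p ^ (j + 1) / z)) =
        (1 + p ^ (2 * N + 1)) * ∏ j ∈ range N, ((1 - z * p ^ j) * (1 - p ^ (j + 1) / z)) -
          z * p ^ N * ∏ j ∈ range N, ((1 - z * p ^ j) * (1 - p ^ (j + 1) / z)) -
          p * p ^ N / z * ∏ j ∈ range N, ((1 - z * p ^ j) * (1 - p ^ (j + 1) / z)) := by
      rw [prod_range_succ]
      field_simp
      ring
    rw [total]
    refine (((ih.mul_left (1 + p ^ (2 * N + 1))).sub (down.mul_left (z * p ^ N))).sub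
      (up.mul_left (p * p ^ N / z))).congr_fun fun n => ?_
    have hX : p ^ n ≠ 0 := zpow_ne_zero n hp0
    have hEn : z * E (n - 1) = -(p / p ^ n) * E n := by
      have := hE (n - 1)
      rw [sub_add_cancel, zpow_sub_one₀ hp0] at this
      rw [this]
      field_simp
    simp only [Function.comp_apply, Equiv.subRight_apply, Equiv.coe_addRight,
      centralQBinom_succ hp hp0, hE n]
    linear_combination p ^ N * centralQBinom p N (n - 1) * hEn -
      p * p ^ N * p ^ n * E n * centralQBinom p N (n + 1) * mul_inv_cancel₀ hz

lemma tprod_one_sub_pow_ne_zero (hp : ‖p‖ < 1) : ∏' j : ℕ, (1 - p ^ (j + 1)) ≠ 0 := by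
  simp only [sub_eq_add_neg]
  refine tprod_one_add_ne_zero_of_summable
    (fun j => by simpa only [sub_eq_add_neg] using one_sub_pow_succ_ne_zero hp j) ?_
  simpa using (summable_nat_add_iff 1).mpr (summable_geometric_of_lt_one (norm_nonneg p) hp)

lemma tendsto_qPochhammer (hp : ‖p‖ < 1) :
    Tendsto (qPochhammer p) atTop (𝓝 (∏' j : ℕ, (1 - p ^ (j + 1)))) :=
  (ModularForm.multipliable_one_sub_pow hp).hasProd.tendsto_prod_nat

lemma tendsto_invQPochhammer (hp : ‖p‖ < 1) :
    Tendsto (invQPochhammer p) atTop (𝓝 (∏' j : ℕ, (1 - p ^ (j + 1)))⁻¹) := by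
  have h := (tendsto_qPochhammer hp).inv₀ (tprod_one_sub_pow_ne_zero hp)
  rw [← Nat.map_cast_int_atTop]
  exact h

lemma tendsto_centralQBinom (hp : ‖p‖ < 1) (n : ℤ) :
    Tendsto (centralQBinom p · n) atTop (𝓝 (∏' j : ℕ, (1 - p ^ (j + 1)))⁻¹) := by
  have hN : Tendsto (fun N : ℕ => (N : ℤ)) atTop atTop := tendsto_natCast_atTop_atTop
  have h := (((tendsto_qPochhammer hp).comp (tendsto_id.const_mul_atTop' two_pos)).mul
    ((tendsto_invQPochhammer hp).comp (tendsto_atTop_add_const_right _ n hN))).mul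
    ((tendsto_invQPochhammer hp).comp (tendsto_atTop_add_const_right _ (-n) hN))
  rwa [mul_inv_cancel₀ (tprod_one_sub_pow_ne_zero hp), one_mul] at h

lemma exists_norm_centralQBinom_le (hp : ‖p‖ < 1) :
    ∃ C, ∀ N n, ‖centralQBinom p N n‖ ≤ C := by
  have h := tendsto_qPochhammer hp
  obtain ⟨A, hA⟩ := h.norm.bddAbove_range
  obtain ⟨B, hB⟩ := (h.inv₀ (tprod_one_sub_pow_ne_zero hp)).norm.bddAbove_range
  have hA' (m : ℕ) : ‖qPochhammer p m‖ ≤ A := hA ⟨m, rfl⟩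
  have hB' : ∀ m : ℤ, ‖invQPochhammer p m‖ ≤ B
    | (m : ℕ) => hB ⟨m, rfl⟩
    | Int.negSucc m => by
      simpa [invQPochhammer] using (norm_nonneg _).trans (hB ⟨0, rfl⟩)
  have hA0 : 0 ≤ A := (norm_nonneg _).trans (hA' 0)
  have hB0 : 0 ≤ B := (norm_nonneg _).trans (hB' 0)
  refine ⟨A * B * B, fun N n => ?_⟩
  simp only [centralQBinom, norm_mul]
  gcongr
  exacts [hA' _, hB' _, hB' _]

lemma multipliable_one_sub_mul_pow (hp : ‖p‖ < 1) (w : ℂ) :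
    Multipliable fun j : ℕ => 1 - w * p ^ j := by
  simp only [sub_eq_add_neg]
  refine multipliable_one_add_of_summable ?_
  simpa using (summable_geometric_of_lt_one (norm_nonneg p) hp).mul_left ‖w‖

lemma multipliable_one_sub_pow_succ_div (hp : ‖p‖ < 1) (z : ℂ) :
    Multipliable fun j : ℕ => 1 - p ^ (j + 1) / z := by
  convert multipliable_one_sub_mul_pow hp (p / z) using 2
  ring

lemma Theta_eq_mul_tprod (hp : ‖p‖ < 1) (z : ℂ) :
    Theta p z = (∏' j : ℕ, ((1 - z * p ^ j) * (1 - p ^ (j + 1) / z))) *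
      ∏' j : ℕ, (1 - p ^ (j + 1)) :=
  ((multipliable_one_sub_mul_pow hp z).mul (multipliable_one_sub_pow_succ_div hp z)).tprod_mul
    (ModularForm.multipliable_one_sub_pow hp)

theorem Theta_eq_tsum {E : ℤ → ℂ} {z : ℂ} (hp : ‖p‖ < 1) (hp0 : p ≠ 0) (hz : z ≠ 0)
    (hE0 : E 0 = 1) (hE : ∀ n, E (n + 1) = -z * p ^ n * E n) (hsum : Summable E) :
    Theta p z = ∑' n, E n := by
  obtain ⟨C, hC⟩ := exists_norm_centralQBinom_le hp
  have series : Tendsto (fun N => ∑' n, E n * centralQBinom p N n) atTop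
      (𝓝 (∑' n, E n * (∏' j : ℕ, (1 - p ^ (j + 1)))⁻¹)) :=
    tendsto_tsum_of_dominated_convergence (hsum.norm.mul_right C)
      (fun n => (tendsto_centralQBinom hp n).const_mul (E n))
      (.of_forall fun N n => (norm_mul _ _).trans_le (by gcongr; exact hC N n))
  have product := ((multipliable_one_sub_mul_pow hp z).mul
    (multipliable_one_sub_pow_succ_div hp z)).hasProd.tendsto_prod_nat
  have limits := tendsto_nhds_unique (series.congr fun N =>
    (hasSum_mul_centralQBinom hp hp0 hz hE0 hE N).tsum_eq) product
  rw [Theta_eq_mul_tprod hp, ← limits, tsum_mul_right,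
    inv_mul_cancel_right₀ (tprod_one_sub_pow_ne_zero hp)]

theorem Theta_exp (x : ℂ) {σ : ℂ} (hσ : 0 < σ.im) :
    Theta (cexp (2 * Real.pi * I * σ)) (cexp (2 * Real.pi * I * x)) =
      jacobiTheta₂ (x - σ / 2 + 1 / 2) σ := by
  refine Theta_eq_tsum (UpperHalfPlane.norm_exp_two_pi_I_lt_one ⟨σ, hσ⟩) (exp_ne_zero _)
    (exp_ne_zero _) (by simp [jacobiTheta₂_term]) (fun n => ?_)
    ((summable_jacobiTheta₂_term_iff _ _).mpr hσ)
  rw [jacobiTheta₂_term, jacobiTheta₂_term, ← exp_int_mul, ← neg_one_mul (cexp _),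
    ← exp_pi_mul_I, ← exp_add, ← exp_add, ← exp_add]
  congr 1
  push_cast
  ring

end TripleProduct
/-! ### The determinant of the intertwining vectors -/

section ThetaFunctions

lemma Theta_eq_one_sub_mul_tprod {p : ℂ} (hp : ‖p‖ < 1) (z : ℂ) :
    Theta p z = (1 - z) * (∏' n : ℕ, ((1 - z * p ^ (n + 1)) * (1 - p ^ (n + 1) / z))) *
      ∏' n : ℕ, (1 - p ^ (n + 1)) := by
  have hup : Multipliable fun n : ℕ => 1 - z * p ^ (n + 1) := by
    convert multipliable_one_sub_mul_pow hp (z * p) using 2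
    ring
  have hdown := multipliable_one_sub_pow_succ_div hp z
  rw [Theta_eq_mul_tprod hp, (multipliable_one_sub_mul_pow hp z).tprod_mul hdown,
    tprod_eq_zero_mul' (f := fun n : ℕ => 1 - z * p ^ n) hup, hup.tprod_mul hdown, pow_zero,
    mul_one, mul_assoc (1 - z)]

lemma two_mul_sin_pi_mul (v : ℂ) :
    2 * sin (Real.pi * v) = I * cexp (-(I * Real.pi * v)) * (1 - cexp (2 * Real.pi * I * v)) := by
  have : cexp (-(I * Real.pi * v)) * cexp (2 * Real.pi * I * v) = cexp (Real.pi * v * I) := by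
    rw [← exp_add]
    ring_nf
  rw [sin, show -(Real.pi * v) * I = -(I * Real.pi * v) by ring]
  linear_combination I * this

lemma one_sub_mul_cos_add_sq (v w : ℂ) :
    1 - 2 * w * cos (2 * Real.pi * v) + w ^ 2 =
      (1 - cexp (2 * Real.pi * I * v) * w) * (1 - w / cexp (2 * Real.pi * I * v)) := by
  have hcos : 2 * cos (2 * Real.pi * v) =
      cexp (2 * Real.pi * I * v) + (cexp (2 * Real.pi * I * v))⁻¹ := by
    rw [cos, ← exp_neg]
    ring_nf
  linear_combination -w * hcos - w ^ 2 * mul_inv_cancel₀ (exp_ne_zero (2 * Real.pi * I * v))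

lemma th1_eq_Theta (v : ℂ) {σ : ℂ} (hσ : 0 < σ.im) :
    th1 v σ = I * cexp (2 * Real.pi * I * σ / 8) * cexp (-(I * Real.pi * v)) *
      Theta (cexp (2 * Real.pi * I * σ)) (cexp (2 * Real.pi * I * v)) := by
  rw [Theta_eq_one_sub_mul_tprod (UpperHalfPlane.norm_exp_two_pi_I_lt_one ⟨σ, hσ⟩), th1]
  simp only [← one_sub_mul_cos_add_sq, ← pow_mul']
  generalize (∏' n : ℕ, (1 - 2 * _ * _ + _) : ℂ) = P
  linear_combination (cexp (2 * Real.pi * I * σ / 8) *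
    (∏' n : ℕ, (1 - cexp (2 * Real.pi * I * σ) ^ (n + 1))) * P) * two_mul_sin_pi_mul v

lemma th0_eq_jacobiTheta₂ (x : ℂ) {σ : ℂ} (hσ : 0 < σ.im) :
    th0 x σ = jacobiTheta₂ (x + 1 / 2) σ := by
  have phase : cexp (Real.pi * I * (x + σ / 4)) * cexp (2 * Real.pi * I * σ / 8) *
      cexp (-(I * Real.pi * (x + σ / 2))) = 1 := by
    rw [← exp_add, ← exp_add, ← exp_zero]
    ring_nf
  rw [th0, th1_eq_Theta _ hσ, Theta_exp _ hσ, add_sub_cancel_right]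
  linear_combination (-I ^ 2 * jacobiTheta₂ (x + 1 / 2) σ) * phase -
    jacobiTheta₂ (x + 1 / 2) σ * I_sq

lemma th3_eq_jacobiTheta₂ (x : ℂ) {σ : ℂ} (hσ : 0 < σ.im) : th3 x σ = jacobiTheta₂ x σ := by
  have phase : cexp (Real.pi * I * (x + σ / 4)) * cexp (2 * Real.pi * I * σ / 8) *
      cexp (-(I * Real.pi * (x + (σ + 1) / 2))) = -I := by
    rw [← exp_add, ← exp_add, ← exp_neg_pi_div_two_mul_I]
    ring_nf
  rw [th3, th1_eq_Theta _ hσ, Theta_exp _ hσ,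
    show x + (σ + 1) / 2 - σ / 2 + 1 / 2 = x + 1 by ring, jacobiTheta₂_add_left]
  linear_combination (I * jacobiTheta₂ x σ) * phase - jacobiTheta₂ x σ * I_sq

/-- The odd theta function with period parameter `τ`, up to a constant factor. -/
def oddTheta (τ w : ℂ) : ℂ := cexp (-(Real.pi * I * w)) * jacobiTheta₂ (-w + (1 + τ) / 2) τ

lemma exists_br_eq_mul_oddTheta {τ : ℂ} {r : ℝ} (hτ : 0 < τ.im) (hr : r ≠ 0) :
    ∃ K : ℂ, K ≠ 0 ∧ ∀ w : ℂ, br τ r (r * w) = K * oddTheta τ w := by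
  have hτ0 : τ ≠ 0 := by rintro rfl; simp at hτ
  have hr0 : (r : ℂ) ≠ 0 := ofReal_ne_zero.mpr hr
  have hroot : (-I * τ) ^ (1 / 2 : ℂ) ≠ 0 := by simp [cpow_eq_zero_iff, hτ0]
  have him : 0 < (-1 / τ).im := by
    simpa [neg_div, inv_im] using div_pos hτ (normSq_pos.mpr hτ0)
  refine ⟨(-I * τ) ^ (1 / 2 : ℂ) * cexp (Real.pi * I * (1 + τ) ^ 2 / (4 * τ)),
    mul_ne_zero hroot (exp_ne_zero _), fun w => ?_⟩
  have nome : xp τ r (2 * r) = cexp (2 * Real.pi * I * (-1 / τ)) := by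
    rw [xp]; congr 1; field_simp
  have argument : xp τ r (2 * (r * w)) = cexp (2 * Real.pi * I * (-w / τ)) := by
    rw [xp]; congr 1; field_simp
  have phase : xp τ r ((r * w) ^ 2 / r - r * w) =
      cexp (Real.pi * I * (1 + τ) ^ 2 / (4 * τ)) * (cexp (-(Real.pi * I * w)) *
        cexp (-Real.pi * I * (-w + (1 + τ) / 2) ^ 2 / τ)) := by
    rw [xp, ← exp_add, ← exp_add]; congr 1; field_simp; ring
  rw [br, nome, argument, Theta_exp _ him, oddTheta, jacobiTheta₂_functional_equation _ τ,
    show (-w + (1 + τ) / 2) / τ = -w / τ - -1 / τ / 2 + 1 / 2 by field_simp; ring, phase]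
  field_simp

lemma hasSum_jacobiTheta₂_mul_jacobiTheta₂ (x y : ℂ) {σ : ℂ} (hσ : 0 < σ.im) :
    HasSum (fun q : ℤ × ℤ => jacobiTheta₂_term q.1 x σ * jacobiTheta₂_term q.2 y σ)
      (jacobiTheta₂ x σ * jacobiTheta₂ y σ) := by
  have summable (z : ℂ) : Summable fun n => ‖jacobiTheta₂_term n z σ‖ :=
    ((summable_jacobiTheta₂_term_iff z σ).mpr hσ).norm
  rw [jacobiTheta₂, jacobiTheta₂, tsum_mul_tsum_of_summable_norm (summable x) (summable y)]
  exact (summable_mul_of_summable_norm (summable x) (summable y)).hasSum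

lemma jacobiTheta₂_term_add_half (n : ℤ) (x σ : ℂ) :
    jacobiTheta₂_term n (x + 1 / 2) σ = (-1) ^ n * jacobiTheta₂_term n x σ := by
  rw [jacobiTheta₂_term, jacobiTheta₂_term, ← exp_pi_mul_I, ← exp_int_mul, ← exp_add]
  ring_nf

/-- The substitution `(l, j) ↦ (-(l + j + 1), j - l)`, whose range is the set of pairs of integers
of opposite parity. -/
def oppositeParity (q : ℤ × ℤ) : ℤ × ℤ := (-(q.1 + q.2 + 1), q.2 - q.1)

lemma oppositeParity_injective : Function.Injective oppositeParity := by
  rintro ⟨a, b⟩ ⟨c, d⟩ h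
  simp only [oppositeParity, Prod.mk.injEq] at h ⊢
  lia

lemma even_sub_of_notMem_range_oppositeParity {m n : ℤ}
    (h : (m, n) ∉ Set.range oppositeParity) : Even (m - n) := by
  by_contra hodd
  obtain ⟨t, ht⟩ := Int.not_even_iff_odd.mp hodd
  exact h ⟨(-n - t - 1, -t - 1), by simp only [oppositeParity, Prod.mk.injEq]; lia⟩

lemma jacobiTheta₂_term_mul_oppositeParity (τ x y : ℂ) (l j : ℤ) :
    jacobiTheta₂_term (-(l + j + 1)) x (τ / 2) * jacobiTheta₂_term (j - l) y (τ / 2) =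
      (-1) ^ (j - l) * cexp (Real.pi * I * τ / 2) * (cexp (-(Real.pi * I * (x + y))) *
        jacobiTheta₂_term l (-(x + y) + (1 + τ) / 2) τ) * (cexp (-(Real.pi * I * (x - y))) *
        jacobiTheta₂_term j (-(x - y) + (1 + τ) / 2) τ) := by
  simp only [jacobiTheta₂_term]
  rw [← exp_pi_mul_I, ← exp_int_mul]
  simp only [← exp_add]
  refine exp_eq_exp_iff_exists_int.mpr ⟨-j, ?_⟩
  push_cast
  ring

theorem th0_mul_th3_sub_th3_mul_th0 {τ : ℂ} (hτ : 0 < τ.im) (x y : ℂ) :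
    th0 x (τ / 2) * th3 y (τ / 2) - th3 x (τ / 2) * th0 y (τ / 2) =
      -2 * cexp (Real.pi * I * τ / 2) * (oddTheta τ (x + y) * oddTheta τ (x - y)) := by
  have hσ : 0 < (τ / 2).im := by simpa using hτ
  have lhs := (hasSum_jacobiTheta₂_mul_jacobiTheta₂ (x + 1 / 2) y hσ).sub
    (hasSum_jacobiTheta₂_mul_jacobiTheta₂ x (y + 1 / 2) hσ)
  have rhs := (hasSum_jacobiTheta₂_mul_jacobiTheta₂ (-(x + y) + (1 + τ) / 2)
    (-(x - y) + (1 + τ) / 2) hτ).mul_left (-2 * cexp (Real.pi * I * τ / 2) *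
      (cexp (-(Real.pi * I * (x + y))) * cexp (-(Real.pi * I * (x - y)))))
  simp only [jacobiTheta₂_term_add_half] at lhs
  rw [← oppositeParity_injective.hasSum_iff] at lhs
  · rw [th0_eq_jacobiTheta₂ _ hσ, th0_eq_jacobiTheta₂ _ hσ, th3_eq_jacobiTheta₂ _ hσ,
      th3_eq_jacobiTheta₂ _ hσ, oddTheta, oddTheta]
    refine (lhs.unique (rhs.congr_fun ?_)).trans (by ring)
    rintro ⟨l, j⟩
    have sign : (-1 : ℂ) ^ (-(l + j + 1)) = -(-1) ^ (j - l) := by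
      rw [show -(l + j + 1) = (j - l) + (2 * (-j) - 1) by ring, zpow_add₀ (by simp),
        Odd.neg_one_zpow (n := 2 * -j - 1) ⟨-j - 1, by ring⟩, mul_neg_one]
    have square : (-1 : ℂ) ^ (j - l) * (-1) ^ (j - l) = 1 := by
      rw [← mul_zpow]
      simp
    simp only [Function.comp_apply, oppositeParity, sign]
    linear_combination
      -2 * (-1) ^ (j - l) * jacobiTheta₂_term_mul_oppositeParity τ x y l j -
      2 * cexp (Real.pi * I * τ / 2) * (cexp (-(Real.pi * I * (x + y))) *
        jacobiTheta₂_term l (-(x + y) + (1 + τ) / 2) τ) * (cexp (-(Real.pi * I * (x - y))) *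
        jacobiTheta₂_term j (-(x - y) + (1 + τ) / 2) τ) * square
  · rintro ⟨m, n⟩ hmn
    obtain ⟨t, ht⟩ := even_sub_of_notMem_range_oppositeParity hmn
    obtain rfl : m = n + (t + t) := by lia
    have : (-1 : ℂ) ^ (n + (t + t)) = (-1) ^ n := by
      rw [zpow_add₀ (by simp), Even.neg_one_zpow ⟨t, rfl⟩, mul_one]
    simp only [this]
    ring

theorem exists_th0_mul_th3_sub_eq {τ : ℂ} {r : ℝ} (hτ : 0 < τ.im) (hr : r ≠ 0) :
    ∃ K : ℂ, K ≠ 0 ∧ ∀ x y : ℂ,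
      th0 (x / (2 * r)) (τ / 2) * th3 (y / (2 * r)) (τ / 2) -
        th3 (x / (2 * r)) (τ / 2) * th0 (y / (2 * r)) (τ / 2) =
      K * br τ r ((x + y) / 2) * br τ r ((x - y) / 2) := by
  obtain ⟨K, hK, hbr⟩ := exists_br_eq_mul_oddTheta hτ hr
  have hr0 : (r : ℂ) ≠ 0 := ofReal_ne_zero.mpr hr
  refine ⟨-2 * cexp (Real.pi * I * τ / 2) * (K⁻¹ * K⁻¹), by simp [hK], fun x y => ?_⟩
  rw [th0_mul_th3_sub_th3_mul_th0 hτ,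
    show (x + y) / 2 = r * (x / (2 * r) + y / (2 * r)) by field_simp,
    show (x - y) / 2 = r * (x / (2 * r) - y / (2 * r)) by field_simp, hbr, hbr]
  field_simp

end ThetaFunctions

/-! ### Identities from the three-term relation -/

section ThreeTerm

/-- The odd functions satisfying Weierstrass' three-term relation. All identities between face
weights below depend on the bracket only through these two properties. -/
structure WeierstrassRelation (t : ℂ → ℂ) : Prop where
  odd : ∀ x, t (-x) = -t x
  three_term : ∀ x y z w, t (x + y) * t (x - y) * (t (z + w) * t (z - w))
    - t (x + z) * t (x - z) * (t (y + w) * t (y - w))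
    + t (x + w) * t (x - w) * (t (y + z) * t (y - z)) = 0

variable {t : ℂ → ℂ}

lemma WeierstrassRelation.eq_neg_of_eq_neg (h : WeierstrassRelation t) (x : ℂ) {y : ℂ}
    (hxy : y = -x := by ring) : t y = -t x := by
  rw [hxy, h.odd]

lemma WeierstrassRelation.three_term_of_eq (h : WeierstrassRelation t)
    (x y z w : ℂ) {a₁ a₂ a₃ a₄ b₁ b₂ b₃ b₄ c₁ c₂ c₃ c₄ : ℂ}
    (ha₁ : a₁ = x + y := by ring) (ha₂ : a₂ = x - y := by ring)
    (ha₃ : a₃ = z + w := by ring) (ha₄ : a₄ = z - w := by ring)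
    (hb₁ : b₁ = x + z := by ring) (hb₂ : b₂ = x - z := by ring)
    (hb₃ : b₃ = y + w := by ring) (hb₄ : b₄ = y - w := by ring)
    (hc₁ : c₁ = x + w := by ring) (hc₂ : c₂ = x - w := by ring)
    (hc₃ : c₃ = y + z := by ring) (hc₄ : c₄ = y - z := by ring) :
    t a₁ * t a₂ * (t a₃ * t a₄) - t b₁ * t b₂ * (t b₃ * t b₄) +
      t c₁ * t c₂ * (t c₃ * t c₄) = 0 := by
  subst_vars
  exact h.three_term x y z w

/-- The entry of the unfused `L`-matrix for the top edge `(a, a + s)` and the bottom edge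
`(c, c + q)`, in terms of `α = s a` and `γ = q c`; the factor `κ` is a constant. -/
def lEntry (t : ℂ → ℂ) (κ u α γ : ℂ) : ℂ :=
  κ * t ((α + γ) / 2) * t ((α - γ) / 2 - u) / (t γ * t u)

/-- The normalized face weight with corners `(a, a + s; a + s, a)`, in terms of `α = s a`. -/
def diagWeight (t : ℂ → ℂ) (w α : ℂ) : ℂ := t (α - w) * t 1 / (t α * t (1 + w))

/-- The normalized face weight with corners `(a, a + s; a - s, a)`, in terms of `α = s a`. -/
def offDiagWeight (t : ℂ → ℂ) (w α : ℂ) : ℂ := t (α + 1) * t w / (t α * t (1 + w))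

lemma lEntry_eq (κ u α γ P Q : ℂ) (hP : α + γ = 2 * P := by ring) (hQ : α - γ = 2 * Q := by ring) :
    lEntry t κ u α γ = κ * t P * t (Q - u) / (t γ * t u) := by
  simp [lEntry, hP, hQ]

lemma exists_eq_add_eq_sub (α γ : ℂ) : ∃ P Q : ℂ, α = P + Q ∧ γ = P - Q :=
  ⟨(α + γ) / 2, (α - γ) / 2, by ring, by ring⟩

lemma lEntry_mul_lEntry_comm (κ u v α γ : ℂ) :
    lEntry t κ v α γ * lEntry t κ u (α + 1) (γ + 1) =
      lEntry t κ u α γ * lEntry t κ v (α + 1) (γ + 1) := by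
  simp only [lEntry, add_sub_add_right_eq_sub]
  ring

lemma lEntry_yang_baxter_straight_turn (h : WeierstrassRelation t) (κ α : ℂ) {u v γ : ℂ}
    (hγ : t γ ≠ 0) (hγ_add : t (γ + 1) ≠ 0) (hγ_sub : t (γ - 1) ≠ 0) (hw : t (1 + (u - v)) ≠ 0)
    (hu : t u ≠ 0) (hv : t v ≠ 0) :
    lEntry t κ v α γ * lEntry t κ u (α + 1) (-γ - 1) =
      lEntry t κ u α γ * diagWeight t (u - v) γ * lEntry t κ v (α + 1) (-γ - 1) +
      lEntry t κ u α (-γ) * offDiagWeight t (u - v) (-γ) * lEntry t κ v (α + 1) (γ - 1) := by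
  obtain ⟨P, Q, rfl, rfl⟩ := exists_eq_add_eq_sub α γ
  have key : t (P + 1 - u) * t (Q - v) * (t (1 + (u - v)) * t (P - Q)) -
      t (P + 1 - v) * t (Q - u) * (t 1 * t (P - Q - (u - v))) +
      t (Q + 1 - v) * t (P - u) * (t (P - Q + 1) * t (-(u - v))) = 0 :=
    h.three_term_of_eq ((P + Q + 1 - u - v) / 2) ((P - Q + 1 - u + v) / 2)
      ((1 + u - v + P - Q) / 2) ((1 + u - v - P + Q) / 2)
  rw [lEntry_eq κ v (P + Q) (P - Q) P Q, lEntry_eq κ u (P + Q) (P - Q) P Q,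
    lEntry_eq κ u _ (-(P - Q) - 1) Q (P + 1), lEntry_eq κ v _ (-(P - Q) - 1) Q (P + 1),
    lEntry_eq κ u _ (-(P - Q)) Q P, lEntry_eq κ v _ (P - Q - 1) P (Q + 1),
    diagWeight, offDiagWeight, h.eq_neg_of_eq_neg (P - Q + 1) (y := -(P - Q) - 1), h.odd (P - Q),
    h.eq_neg_of_eq_neg (P - Q - 1) (y := -(P - Q) + 1)]
  rw [h.odd] at key
  field_simp
  linear_combination -(κ ^ 2 * t P * t Q) * key

lemma lEntry_yang_baxter_turn_straight (h : WeierstrassRelation t) (κ γ : ℂ) {u v α : ℂ}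
    (hα : t α ≠ 0) (hw : t (1 + (u - v)) ≠ 0) :
    lEntry t κ v α γ * diagWeight t (u - v) α * lEntry t κ u (-α - 1) (γ + 1) +
      lEntry t κ v (-α) γ * offDiagWeight t (u - v) α * lEntry t κ u (α - 1) (γ + 1) =
      lEntry t κ u α γ * lEntry t κ v (-α - 1) (γ + 1) := by
  obtain ⟨P, Q, rfl, rfl⟩ := exists_eq_add_eq_sub α γ
  have key : t (P + 1 + v) * t (Q - u) * (t (1 + (u - v)) * t (P + Q)) -
      t (P + Q + 1) * t (-(u - v)) * (t (-(Q - 1 - u)) * t (P + v)) +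
      t 1 * t (P + Q - (u - v)) * (t (P + 1 + u) * t (-(Q - v))) = 0 :=
    h.three_term_of_eq ((P + Q + 1 - u + v) / 2) ((P - Q + 1 + u + v) / 2)
      ((1 + u - v + P + Q) / 2) ((1 + u - v - P - Q) / 2)
  rw [lEntry_eq κ v (P + Q) (P - Q) P Q, lEntry_eq κ u (P + Q) (P - Q) P Q,
    lEntry_eq κ u (-(P + Q) - 1) _ (-Q) (-P - 1), lEntry_eq κ v (-(P + Q) - 1) _ (-Q) (-P - 1),
    lEntry_eq κ v (-(P + Q)) _ (-Q) (-P), lEntry_eq κ u (P + Q - 1) _ P (Q - 1),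
    diagWeight, offDiagWeight, h.odd Q, h.eq_neg_of_eq_neg (P + 1 + u) (y := -P - 1 - u),
    h.eq_neg_of_eq_neg (P + 1 + v) (y := -P - 1 - v), h.eq_neg_of_eq_neg (P + v) (y := -P - v)]
  rw [h.odd, h.odd, h.odd] at key
  field_simp
  linear_combination -(κ ^ 2 * t P * t Q / (t (P - Q) * t v * t u * t (P - Q + 1))) * key

lemma lEntry_yang_baxter_turn_turn (h : WeierstrassRelation t) (κ : ℂ) {u v α γ : ℂ}
    (hα : t α ≠ 0) (hγ : t γ ≠ 0) (hγ_add : t (γ + 1) ≠ 0) (hγ_sub : t (γ - 1) ≠ 0)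
    (hw : t (1 + (u - v)) ≠ 0) (hu : t u ≠ 0) (hv : t v ≠ 0) :
    lEntry t κ v α γ * diagWeight t (u - v) α * lEntry t κ u (-α - 1) (-γ - 1) +
      lEntry t κ v (-α) γ * offDiagWeight t (u - v) α * lEntry t κ u (α - 1) (-γ - 1) =
    lEntry t κ u α γ * diagWeight t (u - v) γ * lEntry t κ v (-α - 1) (-γ - 1) +
      lEntry t κ u α (-γ) * offDiagWeight t (u - v) (-γ) * lEntry t κ v (-α - 1) (γ - 1) := by
  obtain ⟨P, Q, rfl, rfl⟩ := exists_eq_add_eq_sub α γ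
  have key₁ : t (P + Q - (u - v)) * t (P - Q) * (t (Q + u) * t (Q - v)) -
      t (P + Q) * t (P - Q - (u - v)) * (t (Q + v) * t (Q - u)) +
      t (P + v) * t (P - u) * (t (2 * Q) * t (-(u - v))) = 0 :=
    h.three_term_of_eq (P - (u - v) / 2) (Q - (u - v) / 2) (Q + (u - v) / 2) ((u + v) / 2)
  have key₂ : t (P + Q) * t (P - Q + 1) * (t (Q + 1) * t Q) -
      t (P + Q + 1) * t (P - Q) * (t Q * t (Q - 1)) +
      t (P + 1) * t P * (t (2 * Q) * t (-1)) = 0 :=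
    h.three_term_of_eq (P + 1 / 2) (Q - 1 / 2) (Q + 1 / 2) (1 / 2)
  rw [lEntry_eq κ v (P + Q) (P - Q) P Q, lEntry_eq κ u (P + Q) (P - Q) P Q,
    lEntry_eq κ u (-(P + Q) - 1) (-(P - Q) - 1) (-P - 1) (-Q),
    lEntry_eq κ v (-(P + Q) - 1) (-(P - Q) - 1) (-P - 1) (-Q),
    lEntry_eq κ v (-(P + Q)) _ (-Q) (-P), lEntry_eq κ u (P + Q - 1) _ (Q - 1) P,
    lEntry_eq κ u _ (-(P - Q)) Q P, lEntry_eq κ v _ (P - Q - 1) (-Q - 1) (-P),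
    diagWeight, offDiagWeight, diagWeight, offDiagWeight,
    h.eq_neg_of_eq_neg (P - Q + 1) (y := -(P - Q) - 1), h.odd (P - Q),
    h.eq_neg_of_eq_neg (P - Q - 1) (y := -(P - Q) + 1), h.eq_neg_of_eq_neg (P + 1) (y := -P - 1),
    h.eq_neg_of_eq_neg (Q + u) (y := -Q - u), h.eq_neg_of_eq_neg (Q + v) (y := -Q - v), h.odd Q,
    h.eq_neg_of_eq_neg (P + v) (y := -P - v), h.eq_neg_of_eq_neg (Q + 1) (y := -Q - 1)]
  rw [h.odd] at key₁ key₂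
  field_simp
  linear_combination -(κ ^ 2 * t 1 * t P * t (P + 1)) * key₁ +
    (κ ^ 2 * t (u - v) * t (P + v) * t (P - u)) * key₂

lemma lEntry_exchange_straight (κ w α γ : ℂ) :
    lEntry t κ (w + 1) α γ * lEntry t κ w (-α - 1) (γ + 1) =
    lEntry t κ (w + 1) (-α) γ * lEntry t κ w (α - 1) (γ + 1) := by
  obtain ⟨P, Q, rfl, rfl⟩ := exists_eq_add_eq_sub α γ
  rw [lEntry_eq κ (w + 1) (P + Q) _ P Q, lEntry_eq κ w (-(P + Q) - 1) _ (-Q) (-P - 1),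
    lEntry_eq κ (w + 1) (-(P + Q)) _ (-Q) (-P), lEntry_eq κ w (P + Q - 1) _ P (Q - 1),
    sub_sub, sub_sub, add_comm 1 w]
  ring

lemma WeierstrassRelation.three_term_half_shift (h : WeierstrassRelation t) (w P Q : ℂ) :
    t P * t (Q - (w + 1)) * t (P + 1) * t (Q + w) -
      t Q * t (P + (w + 1)) * t (Q - 1) * t (P - w) =
    -t (P + Q) * t (w + 1) * t w * t (P - Q + 1) := by
  have key : t (P + 1) * t P * (t (Q + w) * t (Q - (w + 1))) -
      t (P + Q) * t (P - Q + 1) * (t (w + 1) * t (-w)) +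
      t (P + (w + 1)) * t (P - w) * (t Q * t (-(Q - 1))) = 0 :=
    h.three_term_of_eq (P + 1 / 2) (1 / 2) (Q - 1 / 2) (w + 1 / 2)
  rw [h.odd, h.odd] at key
  linear_combination key

lemma lEntry_exchange_turn (h : WeierstrassRelation t) (κ w α : ℂ) {γ : ℂ}
    (hγ : t γ ≠ 0) (hγ_add : t (γ + 1) ≠ 0) (hγ_sub : t (γ - 1) ≠ 0) :
    lEntry t κ (w + 1) α γ * lEntry t κ w (-α - 1) (-γ - 1) +
      lEntry t κ (w + 1) α (-γ) * lEntry t κ w (-α - 1) (γ - 1) =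
    lEntry t κ (w + 1) (-α) γ * lEntry t κ w (α - 1) (-γ - 1) +
      lEntry t κ (w + 1) (-α) (-γ) * lEntry t κ w (α - 1) (γ - 1) := by
  by_cases hw : t w = 0
  · simp [lEntry, hw]
  by_cases hw_add : t (w + 1) = 0
  · simp [lEntry, hw_add]
  obtain ⟨P, Q, rfl, rfl⟩ := exists_eq_add_eq_sub α γ
  have keyPQ := h.three_term_half_shift w P Q
  have keyQP := h.three_term_half_shift w Q P
  rw [h.eq_neg_of_eq_neg (P - Q - 1) (y := Q - P + 1), add_comm Q P] at keyQP
  rw [lEntry_eq κ (w + 1) (P + Q) (P - Q) P Q,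
    lEntry_eq κ w (-(P + Q) - 1) (-(P - Q) - 1) (-P - 1) (-Q),
    lEntry_eq κ (w + 1) (P + Q) (-(P - Q)) Q P,
    lEntry_eq κ w (-(P + Q) - 1) (P - Q - 1) (-Q - 1) (-P),
    lEntry_eq κ (w + 1) (-(P + Q)) (P - Q) (-Q) (-P),
    lEntry_eq κ w (P + Q - 1) (-(P - Q) - 1) (Q - 1) P,
    lEntry_eq κ (w + 1) (-(P + Q)) (-(P - Q)) (-P) (-Q),
    lEntry_eq κ w (P + Q - 1) (P - Q - 1) (P - 1) Q,
    h.eq_neg_of_eq_neg (P - Q + 1) (y := -(P - Q) - 1), h.odd (P - Q),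
    h.eq_neg_of_eq_neg (P + 1) (y := -P - 1), h.eq_neg_of_eq_neg (Q + w) (y := -Q - w),
    h.eq_neg_of_eq_neg (P + w) (y := -P - w), h.odd Q, h.odd P,
    h.eq_neg_of_eq_neg (Q + 1) (y := -Q - 1),
    h.eq_neg_of_eq_neg (P + (w + 1)) (y := -P - (w + 1)),
    h.eq_neg_of_eq_neg (Q + (w + 1)) (y := -Q - (w + 1))]
  field_simp
  linear_combination -(κ ^ 2 * t (P - Q - 1)) * keyPQ - κ ^ 2 * t (P - Q + 1) * keyQP

section FaceWeightExchange

variable {w α : ℂ}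

lemma sq_mul_add_sq_mul_eq (h : WeierstrassRelation t) (w α : ℂ) :
    t α ^ 2 * t w * t (w + 2) + t (α - (w + 1)) * t (α + (w + 1)) * t 1 ^ 2 =
      t (α - 1) * t (α + 1) * t (w + 1) ^ 2 := by
  have key : t α * t α * (t (w + 2) * t w) - t (α + (w + 1)) * t (α - (w + 1)) * (t 1 * t (-1)) +
      t (α + 1) * t (α - 1) * (t (w + 1) * t (-(w + 1))) = 0 :=
    h.three_term_of_eq α 0 (w + 1) 1
  rw [h.odd, h.odd] at key
  linear_combination key

lemma offDiagWeight_add_diagWeight_mul_diagWeight (h : WeierstrassRelation t)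
    (hα : t α ≠ 0) (hα_add : t (α + 1) ≠ 0) (hw : t (1 + w) ≠ 0) (hw_add : t (1 + (w + 1)) ≠ 0) :
    offDiagWeight t w (-α - 1) + diagWeight t (w + 1) α * diagWeight t w (-α - 1) =
      offDiagWeight t (w + 1) (-α) := by
  have key := sq_mul_add_sq_mul_eq h w α
  rw [show w + 2 = 1 + (w + 1) by ring] at key
  simp only [offDiagWeight, diagWeight, sub_add_cancel, h.odd α,
    h.eq_neg_of_eq_neg (α + 1) (y := -α - 1), h.eq_neg_of_eq_neg (α - 1) (y := -α + 1),
    h.eq_neg_of_eq_neg (α + (w + 1)) (y := -α - 1 - w), add_comm 1 w] at hw key ⊢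
  field_simp
  linear_combination key

lemma offDiagWeight_mul_diagWeight_sub_one (h : WeierstrassRelation t)
    (hα_sub : t (α - 1) ≠ 0) (hw : t (1 + w) ≠ 0) :
    offDiagWeight t (w + 1) (-α) * diagWeight t w (α - 1) = diagWeight t (w + 1) α := by
  rw [offDiagWeight, diagWeight, diagWeight, h.odd, h.eq_neg_of_eq_neg (α - 1) (y := -α + 1),
    show α - 1 - w = α - (w + 1) by ring, add_comm w 1]
  field_simp

lemma diagWeight_neg_sub_one_mul_offDiagWeight (h : WeierstrassRelation t)
    (hα_add : t (α + 1) ≠ 0) (hw : t (1 + w) ≠ 0) :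
    diagWeight t w (-α - 1) * offDiagWeight t (w + 1) α = diagWeight t (w + 1) (-α) := by
  rw [offDiagWeight, diagWeight, diagWeight, h.odd, h.eq_neg_of_eq_neg (α + 1) (y := -α - 1),
    show -α - 1 - w = -α - (w + 1) by ring, add_comm w 1]
  field_simp

end FaceWeightExchange

/-- The three-term relation is the Plücker relation between the minors of a two-row matrix. -/
theorem weierstrassRelation_br {τ : ℂ} {r : ℝ} (hτ : 0 < τ.im) (hr : r ≠ 0) (h1 : br τ r 1 ≠ 0) :
    WeierstrassRelation (br τ r) := by
  obtain ⟨K, hK, hdet⟩ := exists_th0_mul_th3_sub_eq hτ hr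
  have minor (x y : ℂ) : th0 (2 * x / (2 * r)) (τ / 2) * th3 (2 * y / (2 * r)) (τ / 2) -
      th3 (2 * x / (2 * r)) (τ / 2) * th0 (2 * y / (2 * r)) (τ / 2) =
      K * (br τ r (x + y) * br τ r (x - y)) := by
    rw [hdet, ← mul_add, ← mul_sub, mul_div_cancel_left₀ _ two_ne_zero,
      mul_div_cancel_left₀ _ two_ne_zero, mul_assoc]
  refine ⟨fun x => ?_, fun x y z w => mul_left_cancel₀ (mul_ne_zero hK hK) ?_⟩
  · have hx := minor ((1 + x) / 2) ((1 - x) / 2)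
    have hneg := minor ((1 - x) / 2) ((1 + x) / 2)
    ring_nf at hx hneg
    refine mul_left_cancel₀ (mul_ne_zero hK h1) ?_
    linear_combination -hx - hneg
  · calc
      _ = K * (br τ r (x + y) * br τ r (x - y)) * (K * (br τ r (z + w) * br τ r (z - w))) -
          K * (br τ r (x + z) * br τ r (x - z)) * (K * (br τ r (y + w) * br τ r (y - w))) +
          K * (br τ r (x + w) * br τ r (x - w)) * (K * (br τ r (y + z) * br τ r (y - z))) := by
        ring
      _ = K * K * 0 := by
        simp only [← minor]
        ring

end ThreeTerm

/-! ### The unfused weights -/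

section UnfusedWeights

instance (a b : ℤ) : Decidable (Adj a b) := inferInstanceAs (Decidable (_ ∨ _))

/-- The normalized face weight built from `t` in place of the bracket. It is set to `0` at the
poles `t (1 + w) = 0`, where division by zero in `Wb` would break the exchange relations. -/
def faceWeight (t : ℂ → ℂ) : FaceWeight ℂ ℂ := fun w a b d c =>
  if t (1 + w) = 0 ∨ ¬(Adj a b ∧ Adj a d ∧ Adj b c ∧ Adj d c) then 0
  else if a = c then
    if b = d then diagWeight t w ((b - a) * a) else offDiagWeight t w ((b - a) * a)
  else 1

/-- The unfused `L`-matrix built from `t` in place of the bracket, as a face weight. -/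
def lWeight (t : ℂ → ℂ) (κ : ℂ) : FaceWeight ℂ ℂ := fun u a b c d =>
  if Adj a b ∧ Adj c d then lEntry t κ u ((b - a) * a) ((d - c) * c) else 0

variable {t : ℂ → ℂ} {κ w : ℂ} {a b c d s q M : ℤ}

lemma Adj.of_isUnit (hs : IsUnit s) (hb : b = a + s := by ring) : Adj a b := by
  rw [Int.isUnit_iff] at hs; unfold Adj; lia

lemma Adj.ne_add_three_mul (hab : Adj a b) (hs : IsUnit s) : b ≠ a + 3 * s := by
  rw [Int.isUnit_iff] at hs; unfold Adj at hab; lia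

lemma Interior.pos {n : ℕ} (ha : Interior M n a) : 0 < a := (Finset.mem_Ioo.mp ha.mem_Ioo).1

lemma Adj.exists_isUnit (hab : Adj a b) : ∃ s, IsUnit s ∧ b = a + s := by
  rcases hab with rfl | rfl
  exacts [⟨1, isUnit_one, rfl⟩, ⟨-1, isUnit_one.neg, rfl⟩]

lemma Adj.eq_add_or_eq_sub (hab : Adj a b) (hs : IsUnit s) : b = a + s ∨ b = a - s := by
  rw [Int.isUnit_iff] at hs; unfold Adj at hab; lia

lemma cast_mul_self_of_isUnit (hs : IsUnit s) : (s : ℂ) * s = 1 := by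
  exact_mod_cast Int.isUnit_mul_self hs

lemma sum_Ioo_eq_add_of_isUnit (hd : Interior M 1 d) (hs : IsUnit s) (f : ℤ → ℂ)
    (hf : ∀ x, ¬Adj d x → f x = 0) : ∑ x ∈ Ioo 0 M, f x = f (d + s) + f (d - s) := by
  have hne : d + s ≠ d - s := by rw [Int.isUnit_iff] at hs; lia
  have hsub : {d + s, d - s} ⊆ Ioo 0 M := insert_subset
    (hd.of_adj (.of_isUnit hs) le_rfl).mem_Ioo
    (singleton_subset_iff.mpr (hd.of_adj (.of_isUnit hs.neg) le_rfl).mem_Ioo)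
  rw [← sum_pair hne, sum_subset hsub]
  intro x _ hx
  refine hf x fun hdx => hx ?_
  simpa using hdx.eq_add_or_eq_sub hs

lemma faceWeight_eq_zero (h : ¬(Adj a b ∧ Adj a d ∧ Adj b c ∧ Adj d c)) :
    faceWeight t w a b d c = 0 := if_pos (.inr h)

lemma faceWeight_pole (hw : t (1 + w) = 0) : faceWeight t w a b d c = 0 := if_pos (.inl hw)

lemma bottomAdj_faceWeight : BottomAdj (faceWeight t) :=
  fun _ _ _ _ _ h => faceWeight_eq_zero (by tauto)

lemma sideAdj_faceWeight : SideAdj (faceWeight t) :=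
  fun _ _ _ _ _ h => faceWeight_eq_zero (by tauto)

lemma topAdj_lWeight : TopAdj (lWeight t κ) := fun _ _ _ _ _ h => if_neg (by tauto)

lemma bottomAdj_lWeight : BottomAdj (lWeight t κ) := fun _ _ _ _ _ h => if_neg (by tauto)

lemma faceWeight_straight (hw : t (1 + w) ≠ 0) (hs : IsUnit s) (hb : b = a + s := by ring)
    (hd : d = a + s := by ring) (hc : c = a + 2 * s := by ring) : faceWeight t w a b d c = 1 := by
  subst hb hd hc
  have hac : a ≠ a + 2 * s := by rw [Int.isUnit_iff] at hs; lia
  have hsc : Adj (a + s) (a + 2 * s) := .of_isUnit hs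
  simp [faceWeight, hw, hac, hsc, Adj.of_isUnit hs (rfl : a + s = a + s)]

lemma faceWeight_diag (hw : t (1 + w) ≠ 0) (hs : IsUnit s) (α : ℂ) (hb : b = a + s := by ring)
    (hd : d = a + s := by ring) (hc : c = a := by ring) (hα : α = s * a := by grind) :
    faceWeight t w a b d c = diagWeight t w α := by
  subst hb hd hc hα
  have hcs : Adj c (c + s) := .of_isUnit hs
  simp [faceWeight, hw, hcs, hcs.symm]

lemma faceWeight_offDiag (hw : t (1 + w) ≠ 0) (hs : IsUnit s) (α : ℂ) (hb : b = a + s := by ring)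
    (hd : d = a - s := by ring) (hc : c = a := by ring) (hα : α = s * a := by grind) :
    faceWeight t w a b d c = offDiagWeight t w α := by
  subst hb hd hc hα
  have hne : c + s ≠ c - s := by rw [Int.isUnit_iff] at hs; lia
  have hcs : Adj c (c + s) := .of_isUnit hs
  have hcs' : Adj c (c - s) := .of_isUnit hs.neg
  simp [faceWeight, hw, hcs, hcs', hcs.symm, hcs'.symm, hne]

lemma lWeight_eq_lEntry (u : ℂ) (hs : IsUnit s) (hq : IsUnit q) (α γ : ℂ)
    (hb : b = a + s := by ring) (hd : d = c + q := by ring)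
    (hα : α = s * a := by grind) (hγ : γ = q * c := by grind) :
    lWeight t κ u a b c d = lEntry t κ u α γ := by
  subst hb hd hα hγ
  simp [lWeight, Adj.of_isUnit hs (rfl : a + s = a + s), Adj.of_isUnit hq (rfl : c + q = c + q)]

lemma WeierstrassRelation.ne_zero_of_isUnit (h : WeierstrassRelation t)
    (hpos : ∀ n : ℤ, 0 < n → t n ≠ 0) (hs : IsUnit s) (ha : 0 < a) {α : ℂ}
    (hα : α = s * a := by grind) : t α ≠ 0 := by
  subst hα
  rcases Int.isUnit_iff.mp hs with rfl | rfl
  · simpa using hpos a ha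
  · simpa [h.odd] using hpos a ha

lemma sum_faceWeight_mul_faceWeight_top (h : WeierstrassRelation t)
    (hpos : ∀ n : ℤ, 0 < n → t n ≠ 0) (w : ℂ) (hs : IsUnit s) (ha : Interior M 1 a)
    (hd : Interior M 1 (a + s)) (c : ℤ) :
    ∑ x ∈ Ioo 0 M, faceWeight t (w + 1) a (a + s) (a + s) x * faceWeight t w (a + s) a x c =
      ∑ x ∈ Ioo 0 M, faceWeight t (w + 1) a (a - s) (a + s) x * faceWeight t w (a - s) a x c := by
  by_cases hw_add : t (1 + (w + 1)) = 0
  · simp [faceWeight_pole hw_add]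
  by_cases hw : t (1 + w) = 0
  · simp [faceWeight_pole hw]
  by_cases hac : Adj a c
  swap
  · simp [sideAdj_faceWeight w, hac]
  rw [sum_Ioo_eq_add_of_isUnit hd hs _ fun x hx => by simp [bottomAdj_faceWeight _ _ _ _ _ hx],
    sum_Ioo_eq_add_of_isUnit hd hs _ fun x hx => by simp [bottomAdj_faceWeight _ _ _ _ _ hx],
    add_sub_cancel_right]
  have hss := cast_mul_self_of_isUnit hs
  have hα : t (s * a) ≠ 0 := h.ne_zero_of_isUnit hpos hs ha.pos
  have hα_add : t (s * a + 1) ≠ 0 := h.ne_zero_of_isUnit hpos hs hd.pos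
  have hα_sub : t (s * a - 1) ≠ 0 := h.ne_zero_of_isUnit hpos hs
    (ha.of_adj (b := a - s) (m := 0) (.of_isUnit hs.neg) le_rfl).pos
  rw [faceWeight_diag (d := a + s) (c := a) hw_add hs (s * a),
    faceWeight_offDiag (d := a + s) (c := a) hw_add hs.neg (-(s * a)),
    faceWeight_eq_zero (b := a - s) (c := a + s + s) fun hh =>
      hh.2.2.1.ne_add_three_mul hs (by ring)]
  rcases hac.eq_add_or_eq_sub hs with rfl | rfl
  · rw [faceWeight_straight hw_add hs, faceWeight_offDiag hw hs.neg (-(s * a) - 1),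
      faceWeight_diag (d := a) hw hs.neg (-(s * a) - 1),
      faceWeight_straight (a := a - s) (d := a) hw hs]
    simpa using offDiagWeight_add_diagWeight_mul_diagWeight h hα hα_add hw hw_add
  · rw [faceWeight_eq_zero (b := a) (d := a + s + s) fun hh =>
        hh.2.2.2.ne_add_three_mul hs.neg (by ring),
      faceWeight_straight hw hs.neg, faceWeight_diag (a := a - s) (d := a) hw hs (s * a - 1)]
    simpa using (offDiagWeight_mul_diagWeight_sub_one h hα_sub hw).symm

lemma topExchange_faceWeight (h : WeierstrassRelation t) (hpos : ∀ n : ℤ, 0 < n → t n ≠ 0) :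
    TopExchange M 1 (faceWeight t) := by
  intro w a d c ha hd
  by_cases had : Adj a d
  · rcases had with rfl | rfl
    · exact sum_faceWeight_mul_faceWeight_top h hpos w isUnit_one ha hd c
    · simpa [← sub_eq_add_neg] using
        (sum_faceWeight_mul_faceWeight_top h hpos w isUnit_one.neg ha hd c).symm
  · simp [sideAdj_faceWeight (w + 1), had]

lemma sum_faceWeight_mul_faceWeight_right (h : WeierstrassRelation t)
    (hpos : ∀ n : ℤ, 0 < n → t n ≠ 0) (w : ℂ) (hs : IsUnit s) (ha : Interior M 1 (a + s)) (c : ℤ) :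
    ∑ x ∈ Ioo 0 M, faceWeight t w (a + s) a x (a + s) * faceWeight t (w + 1) x (a + s) c a =
      ∑ x ∈ Ioo 0 M, faceWeight t w (a + s) a x (a - s) * faceWeight t (w + 1) x (a - s) c a := by
  by_cases hw_add : t (1 + (w + 1)) = 0
  · simp [faceWeight_pole hw_add]
  by_cases hw : t (1 + w) = 0
  · simp [faceWeight_pole hw]
  by_cases hca : Adj c a
  swap
  · simp [bottomAdj_faceWeight (w + 1) _ _ _ _ hca]
  rw [sum_Ioo_eq_add_of_isUnit ha hs _ fun x hx => by simp [sideAdj_faceWeight w, hx],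
    sum_Ioo_eq_add_of_isUnit ha hs _ fun x hx => by simp [sideAdj_faceWeight w, hx],
    add_sub_cancel_right]
  have hss := cast_mul_self_of_isUnit hs
  have hα : t (s * a) ≠ 0 := h.ne_zero_of_isUnit hpos hs
    (ha.of_adj (b := a) (m := 0) (.of_isUnit hs.neg) le_rfl).pos
  have hα_add : t (s * a + 1) ≠ 0 := h.ne_zero_of_isUnit hpos hs ha.pos
  rw [faceWeight_diag (d := a) hw hs.neg (-(s * a) - 1),
    faceWeight_straight (d := a) hw hs.neg,
    faceWeight_eq_zero (d := a + s + s) (c := a - s) fun hh =>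
      hh.2.2.2.ne_add_three_mul hs.neg (by ring)]
  rcases hca.symm.eq_add_or_eq_sub hs with rfl | rfl
  · rw [faceWeight_offDiag hw hs.neg (-(s * a) - 1), faceWeight_straight hw_add hs.neg,
      faceWeight_diag (a := a) hw_add hs (s * a),
      faceWeight_offDiag (a := a) hw_add hs.neg (-(s * a))]
    simpa [mul_comm] using offDiagWeight_add_diagWeight_mul_diagWeight h hα hα_add hw hw_add
  · rw [faceWeight_eq_zero (a := a + s + s) (d := a - s) fun hh =>
        hh.2.1.ne_add_three_mul hs.neg (by ring),
      faceWeight_offDiag hw_add hs (s * a),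
      faceWeight_diag (a := a) hw_add hs.neg (-(s * a))]
    simpa using diagWeight_neg_sub_one_mul_offDiagWeight h hα_add hw

lemma rightExchange_faceWeight (h : WeierstrassRelation t) (hpos : ∀ n : ℤ, 0 < n → t n ≠ 0) :
    RightExchange M (faceWeight t) := by
  intro w a c e ha
  by_cases hea : Adj e a
  · rcases hea with rfl | rfl
    · exact sum_faceWeight_mul_faceWeight_right h hpos w isUnit_one ha c
    · simpa [← sub_eq_add_neg] using
        (sum_faceWeight_mul_faceWeight_right h hpos w isUnit_one.neg ha c).symm
  · have hae : ¬Adj a e := fun hae => hea hae.symm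
    simp [faceWeight_eq_zero (a := a) (b := e), hae]

lemma topExchange_lWeight (h : WeierstrassRelation t) (hpos : ∀ n : ℤ, 0 < n → t n ≠ 0) :
    TopExchange M 1 (lWeight t κ) := by
  intro w a d c _ hd
  have hone : IsUnit (1 : ℤ) := isUnit_one
  by_cases hdc : ∃ q, IsUnit q ∧ Adj (d + q) c
  swap
  · have hvanish (b b' x : ℤ) : lWeight t κ (w + 1) a b d x * lWeight t κ w b' a x c = 0 := by
      by_cases hdx : Adj d x
      · obtain ⟨q, hq, rfl⟩ := hdx.exists_isUnit
        rw [bottomAdj_lWeight w _ _ _ _ fun hxc => hdc ⟨q, hq, hxc⟩, mul_zero]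
      · rw [bottomAdj_lWeight _ _ _ _ _ hdx, zero_mul]
    simp [hvanish]
  obtain ⟨q, hq, hqc⟩ := hdc
  have hqq := cast_mul_self_of_isUnit hq
  rw [sum_Ioo_eq_add_of_isUnit hd hq _ fun x hx => by simp [bottomAdj_lWeight _ _ _ _ _ hx],
    sum_Ioo_eq_add_of_isUnit hd hq _ fun x hx => by simp [bottomAdj_lWeight _ _ _ _ _ hx],
    lWeight_eq_lEntry (b := a + 1) (d := d + q) (w + 1) hone hq a (q * d),
    lWeight_eq_lEntry (b := a - 1) (d := d + q) (w + 1) hone.neg hq (-a) (q * d)]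
  rcases hqc.eq_add_or_eq_sub hq with rfl | rfl
  · rw [bottomAdj_lWeight _ _ _ (d - q) (d + q + q) fun hh => hh.ne_add_three_mul hq (by ring),
      bottomAdj_lWeight _ _ _ (d - q) (d + q + q) fun hh => hh.ne_add_three_mul hq (by ring),
      lWeight_eq_lEntry w hone.neg hq (-a - 1) (q * d + 1),
      lWeight_eq_lEntry (a := a - 1) w hone hq (a - 1) (q * d + 1)]
    simpa using lEntry_exchange_straight κ w a (q * d)
  · have hγ : t (q * d) ≠ 0 := h.ne_zero_of_isUnit hpos hq hd.pos
    have hγ_add : t (q * d + 1) ≠ 0 := h.ne_zero_of_isUnit hpos hq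
      (hd.of_adj (b := d + q) (m := 0) (.of_isUnit hq) le_rfl).pos
    have hγ_sub : t (q * d - 1) ≠ 0 := h.ne_zero_of_isUnit hpos hq
      (hd.of_adj (b := d - q) (m := 0) (.of_isUnit hq.neg) le_rfl).pos
    rw [lWeight_eq_lEntry (a := a + 1) (c := d + q) w hone.neg hq.neg (-a - 1) (-(q * d) - 1),
      lWeight_eq_lEntry (b := a + 1) (d := d - q) (w + 1) hone hq.neg a (-(q * d)),
      lWeight_eq_lEntry (a := a + 1) (c := d - q) w hone.neg hq (-a - 1) (q * d - 1),
      lWeight_eq_lEntry (a := a - 1) (c := d + q) w hone hq.neg (a - 1) (-(q * d) - 1),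
      lWeight_eq_lEntry (b := a - 1) (d := d - q) (w + 1) hone.neg hq.neg (-a) (-(q * d)),
      lWeight_eq_lEntry (a := a - 1) (c := d - q) w hone hq (a - 1) (q * d - 1)]
    exact lEntry_exchange_turn h κ w a hγ hγ_add hγ_sub

variable {u v : ℂ} {e g s' q' : ℤ}

lemma sum_lWeight_mul_faceWeight_mul_lWeight_straight (hw : t (1 + (u - v)) ≠ 0)
    (hs : IsUnit s) (hq : IsUnit q) (hq' : IsUnit q') (ha : Interior M 1 a) (γ : ℂ)
    (he : e = g + q + q') (hγ : γ = q' * (g + q)) :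
    ∑ d ∈ Ioo 0 M, lWeight t κ v a d g (g + q) *
        (faceWeight t (u - v) a (a + s) d (a + s + s) * lWeight t κ u d (a + s + s) (g + q) e) =
      lEntry t κ v (s * a) (q * g) * lEntry t κ u (s * a + 1) γ := by
  subst he
  have hss := cast_mul_self_of_isUnit hs
  rw [sum_Ioo_eq_add_of_isUnit ha hs _ fun x hx => by simp [topAdj_lWeight _ _ _ _ _ hx],
    faceWeight_eq_zero (d := a - s) fun hh => hh.2.2.2.ne_add_three_mul hs (by ring),
    faceWeight_straight hw hs, lWeight_eq_lEntry v hs hq (s * a) (q * g),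
    lWeight_eq_lEntry (a := a + s) u hs hq' (s * a + 1) γ]
  ring

lemma sum_lWeight_mul_faceWeight_mul_lWeight_turn (hw : t (1 + (u - v)) ≠ 0)
    (hs : IsUnit s) (hq : IsUnit q) (hq' : IsUnit q') (ha : Interior M 1 a) (γ : ℂ)
    (he : e = g + q + q') (hγ : γ = q' * (g + q)) :
    ∑ d ∈ Ioo 0 M, lWeight t κ v a d g (g + q) *
        (faceWeight t (u - v) a (a + s) d a * lWeight t κ u d a (g + q) e) =
      lEntry t κ v (s * a) (q * g) * diagWeight t (u - v) (s * a) * lEntry t κ u (-(s * a) - 1) γ +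
      lEntry t κ v (-(s * a)) (q * g) * offDiagWeight t (u - v) (s * a) *
        lEntry t κ u (s * a - 1) γ := by
  subst he
  have hss := cast_mul_self_of_isUnit hs
  rw [sum_Ioo_eq_add_of_isUnit ha hs _ fun x hx => by simp [topAdj_lWeight _ _ _ _ _ hx],
    faceWeight_diag hw hs (s * a), faceWeight_offDiag hw hs (s * a),
    lWeight_eq_lEntry (b := a + s) v hs hq (s * a) (q * g),
    lWeight_eq_lEntry (b := a - s) v hs.neg hq (-(s * a)) (q * g),
    lWeight_eq_lEntry (a := a + s) u hs.neg hq' (-(s * a) - 1) γ,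
    lWeight_eq_lEntry (a := a - s) u hs hq' (s * a - 1) γ]
  ring

lemma sum_lWeight_mul_lWeight_mul_faceWeight_straight (hw : t (1 + (u - v)) ≠ 0)
    (hs : IsUnit s) (hq : IsUnit q) (hs' : IsUnit s') (hg : Interior M 1 g) (α : ℂ)
    (hc : c = a + s + s') (hα : α = s' * (a + s)) :
    ∑ d ∈ Ioo 0 M, lWeight t κ u a (a + s) g d *
        faceWeight t (u - v) g d (g + q) (g + q + q) * lWeight t κ v (a + s) c d (g + q + q) =
      lEntry t κ u (s * a) (q * g) * lEntry t κ v α (q * g + 1) := by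
  subst hc
  have hqq := cast_mul_self_of_isUnit hq
  rw [sum_Ioo_eq_add_of_isUnit hg hq _ fun x hx => by simp [bottomAdj_lWeight _ _ _ _ _ hx],
    faceWeight_eq_zero (b := g - q) fun hh => hh.2.2.1.ne_add_three_mul hq (by ring),
    faceWeight_straight hw hq, lWeight_eq_lEntry u hs hq (s * a) (q * g),
    lWeight_eq_lEntry (c := g + q) v hs' hq α (q * g + 1)]
  ring

lemma sum_lWeight_mul_lWeight_mul_faceWeight_turn (hw : t (1 + (u - v)) ≠ 0)
    (hs : IsUnit s) (hq : IsUnit q) (hs' : IsUnit s') (hg : Interior M 1 g) (α : ℂ)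
    (hc : c = a + s + s') (hα : α = s' * (a + s)) :
    ∑ d ∈ Ioo 0 M, lWeight t κ u a (a + s) g d *
        faceWeight t (u - v) g d (g + q) g * lWeight t κ v (a + s) c d g =
      lEntry t κ u (s * a) (q * g) * diagWeight t (u - v) (q * g) * lEntry t κ v α (-(q * g) - 1) +
      lEntry t κ u (s * a) (-(q * g)) * offDiagWeight t (u - v) (-(q * g)) *
        lEntry t κ v α (q * g - 1) := by
  subst hc
  have hqq := cast_mul_self_of_isUnit hq
  rw [sum_Ioo_eq_add_of_isUnit hg hq _ fun x hx => by simp [bottomAdj_lWeight _ _ _ _ _ hx],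
    faceWeight_diag hw hq (q * g), faceWeight_offDiag hw hq.neg (-(q * g)),
    lWeight_eq_lEntry (d := g + q) u hs hq (s * a) (q * g),
    lWeight_eq_lEntry (d := g - q) u hs hq.neg (s * a) (-(q * g)),
    lWeight_eq_lEntry (c := g + q) v hs' hq.neg α (-(q * g) - 1),
    lWeight_eq_lEntry (c := g - q) v hs' hq α (q * g - 1)]

lemma lWeight_intertwines_faceWeight (h : WeierstrassRelation t)
    (hpos : ∀ n : ℤ, 0 < n → t n ≠ 0) (hw : t (1 + (u - v)) ≠ 0) (hu : t u ≠ 0) (hv : t v ≠ 0)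
    (hs : IsUnit s) (hq : IsUnit q) (ha : Interior M 1 a) (hg : Interior M 1 g)
    (hc : Adj (a + s) c) (he : Adj (g + q) e) :
    ∑ d ∈ Ioo 0 M, lWeight t κ v a d g (g + q) *
        (faceWeight t (u - v) a (a + s) d c * lWeight t κ u d c (g + q) e) =
      ∑ d ∈ Ioo 0 M, lWeight t κ u a (a + s) g d *
        faceWeight t (u - v) g d (g + q) e * lWeight t κ v (a + s) c d e := by
  have hss := cast_mul_self_of_isUnit hs
  have hqq := cast_mul_self_of_isUnit hq
  have hα : t (s * a) ≠ 0 := h.ne_zero_of_isUnit hpos hs ha.pos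
  have hγ : t (q * g) ≠ 0 := h.ne_zero_of_isUnit hpos hq hg.pos
  have hγ_add : t (q * g + 1) ≠ 0 := h.ne_zero_of_isUnit hpos hq
    (hg.of_adj (b := g + q) (m := 0) (.of_isUnit hq) le_rfl).pos
  have hγ_sub : t (q * g - 1) ≠ 0 := h.ne_zero_of_isUnit hpos hq
    (hg.of_adj (b := g - q) (m := 0) (.of_isUnit hq.neg) le_rfl).pos
  rcases hc.eq_add_or_eq_sub hs with rfl | rfl <;> rcases he.eq_add_or_eq_sub hq with rfl | rfl <;>
    try simp only [add_sub_cancel_right]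
  · rw [sum_lWeight_mul_faceWeight_mul_lWeight_straight hw hs hq hq ha (q * g + 1) rfl (by grind),
      sum_lWeight_mul_lWeight_mul_faceWeight_straight hw hs hq hs hg (s * a + 1) rfl (by grind)]
    exact lEntry_mul_lEntry_comm κ u v _ _
  · rw [sum_lWeight_mul_faceWeight_mul_lWeight_straight hw hs hq hq.neg ha (-(q * g) - 1)
        (by ring) (by grind),
      sum_lWeight_mul_lWeight_mul_faceWeight_turn hw hs hq hs hg (s * a + 1) rfl (by grind)]
    exact lEntry_yang_baxter_straight_turn h κ _ hγ hγ_add hγ_sub hw hu hv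
  · rw [sum_lWeight_mul_faceWeight_mul_lWeight_turn hw hs hq hq ha (q * g + 1) rfl (by grind),
      sum_lWeight_mul_lWeight_mul_faceWeight_straight hw hs hq hs.neg hg (-(s * a) - 1)
        (by ring) (by grind)]
    exact lEntry_yang_baxter_turn_straight h κ _ hα hw
  · rw [sum_lWeight_mul_faceWeight_mul_lWeight_turn hw hs hq hq.neg ha (-(q * g) - 1)
        (by ring) (by grind),
      sum_lWeight_mul_lWeight_mul_faceWeight_turn hw hs hq hs.neg hg (-(s * a) - 1)
        (by ring) (by grind)]
    exact lEntry_yang_baxter_turn_turn h κ hα hγ hγ_add hγ_sub hw hu hv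

lemma lWeight_pole (hu : t u = 0) : lWeight t κ u a b c d = 0 := by simp [lWeight, lEntry, hu]

theorem isIntertwiner_faceWeight_lWeight (h : WeierstrassRelation t)
    (hpos : ∀ n : ℤ, 0 < n → t n ≠ 0) : IsIntertwiner M (faceWeight t) (lWeight t κ) := by
  intro u v a b g f c e hab ha hg _
  by_cases hw : t (1 + (u - v)) = 0
  · simp [faceWeight_pole hw]
  by_cases hu : t u = 0
  · simp [lWeight_pole hu]
  by_cases hv : t v = 0
  · simp [lWeight_pole hv]
  by_cases hbc : Adj b c
  swap
  · simp [topAdj_lWeight v _ _ _ _ hbc, sideAdj_faceWeight (u - v), hbc]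
  by_cases hgf : Adj g f
  swap
  · simp [bottomAdj_lWeight v _ _ _ _ hgf, sideAdj_faceWeight (u - v), hgf]
  by_cases hfe : Adj f e
  swap
  · simp [bottomAdj_lWeight u _ _ _ _ hfe, bottomAdj_faceWeight (u - v) _ _ _ _ hfe]
  obtain ⟨s, hs, rfl⟩ := hab.exists_isUnit
  obtain ⟨q, hq, rfl⟩ := hgf.exists_isUnit
  exact lWeight_intertwines_faceWeight h hpos hw hu hv hs hq ha hg hbc hfe

end UnfusedWeights

/-! ### Intertwining vectors -/

section IntertwiningVectors

variable {τ : ℂ} {r : ℝ}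

lemma WeierstrassRelation.isUnit_mul {t : ℂ → ℂ} (h : WeierstrassRelation t) {s : ℤ}
    (hs : IsUnit s) (x : ℂ) : t (s * x) = s * t x := by
  rcases Int.isUnit_iff.mp hs with rfl | rfl <;> simp [h.odd]

lemma exists_psi_mul_psi_sub_eq (hτ : 0 < τ.im) (hr : r ≠ 0) :
    ∃ K : ℂ, ∀ (u v : ℂ) (a b c d : ℤ) (X Y : ℂ), (a - b) * u + a = X + Y →
      (c - d) * v + c = X - Y →
      psi τ r u 1 a b * psi τ r v (-1) c d - psi τ r u (-1) a b * psi τ r v 1 c d =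
        K * br τ r X * br τ r Y := by
  obtain ⟨K, -, hK⟩ := exists_th0_mul_th3_sub_eq hτ hr
  refine ⟨K, fun u v a b c d X Y hX hY => ?_⟩
  have hdet := hK (X + Y) (X - Y)
  rw [add_add_sub_cancel, add_sub_sub_cancel, add_self_div_two, add_self_div_two] at hdet
  simpa [psi, hX, hY] using hdet

theorem exists_lWeight_eq (hτ : 0 < τ.im) (hr : r ≠ 0) (h : WeierstrassRelation (br τ r)) :
    ∃ κ : ℂ, ∀ (u : ℂ) (a b c d : ℤ), Adj a b → Adj c d →
      lWeight (br τ r) κ u a b c d =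
        psiStar τ r u 1 d c * psi τ r u 1 a b + psiStar τ r u (-1) d c * psi τ r u (-1) a b := by
  obtain ⟨K, hK⟩ := exists_psi_mul_psi_sub_eq hτ hr
  refine ⟨-(Cc τ r ^ 2 * K / 2), fun u a b c d hab hcd => ?_⟩
  obtain ⟨s, hs, rfl⟩ := hab.exists_isUnit
  obtain ⟨q, hq, rfl⟩ := hcd.exists_isUnit
  rw [lWeight_eq_lEntry u hs hq (s * a) (q * c), lEntry, h.isUnit_mul hq]
  have hdet : psi τ r u 1 a (a + s) * psi τ r (u - 1) (-1) (c + q) c -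
      psi τ r u (-1) a (a + s) * psi τ r (u - 1) 1 (c + q) c =
        K * br τ r ((s * a + q * c) / 2) * br τ r ((s * a - q * c) / 2 - u) := by
    have hneg (X Y : ℂ) : br τ r X * br τ r Y = br τ r (-X) * br τ r (-Y) := by
      rw [h.odd, h.odd, neg_mul_neg]
    rcases Int.isUnit_iff.mp hs with rfl | rfl <;> rcases Int.isUnit_iff.mp hq with rfl | rfl
    · exact hK _ _ _ _ _ _ _ _ (by push_cast; ring) (by push_cast; ring)
    · rw [mul_right_comm]
      exact hK _ _ _ _ _ _ _ _ (by push_cast; ring) (by push_cast; ring)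
    · rw [mul_right_comm, mul_assoc, hneg, ← mul_assoc]
      exact hK _ _ _ _ _ _ _ _ (by push_cast; ring) (by push_cast; ring)
    · rw [mul_assoc, hneg, ← mul_assoc]
      exact hK _ _ _ _ _ _ _ _ (by push_cast; ring) (by push_cast; ring)
  have hqq := cast_mul_self_of_isUnit hq
  have hq_inv : (q : ℂ)⁻¹ = q := inv_eq_of_mul_eq_one_left hqq
  generalize br τ r ((s * a + q * c) / 2) = X at hdet ⊢
  generalize br τ r ((s * a - q * c) / 2 - u) = Y at hdet ⊢
  simp only [psiStar, neg_neg, div_eq_mul_inv, mul_inv, hq_inv]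
  push_cast
  linear_combination (q * Cc τ r ^ 2 * 2⁻¹ * (br τ r c)⁻¹ * (br τ r u)⁻¹) * hdet

lemma exists_psiStar_mul_psiStar_sub_eq (hτ : 0 < τ.im) (hr : r ≠ 0)
    (h : WeierstrassRelation (br τ r)) (w : ℂ) (d : ℤ) :
    ∃ E : ℂ, ∀ q : ℤ, IsUnit q → br τ r ((d + q : ℤ) : ℂ) ≠ 0 →
      psiStar τ r (w + 1) 1 (d + q) d * psiStar τ r w (-1) d (d + q) -
        psiStar τ r (w + 1) (-1) (d + q) d * psiStar τ r w 1 d (d + q) = q * E := by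
  obtain ⟨K, hK⟩ := exists_psi_mul_psi_sub_eq hτ hr
  refine ⟨-(Cc τ r ^ 4 * K * br τ r w / (4 * br τ r d * br τ r (w + 1) * br τ r w)),
    fun q hq hdq => ?_⟩
  have hqq := cast_mul_self_of_isUnit hq
  have hdet := hK w (w - 1) (d + q) d d (d + q) (d + q : ℤ) (q * w) (by push_cast; ring)
    (by push_cast; ring)
  rw [h.isUnit_mul hq] at hdet
  simp only [psiStar, neg_neg, add_sub_cancel_right]
  have hinv := mul_inv_cancel₀ hdq
  set A := Cc τ r ^ 4 / (4 * br τ r d * br τ r (w + 1) * br τ r w)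
  push_cast at *
  linear_combination (-q ^ 2 * A * (br τ r (d + q))⁻¹) * hdet
    - A * K * br τ r w * (q ^ 3 * hinv + q * hqq)

lemma psiStar_exchange_turn (hτ : 0 < τ.im) (hr : r ≠ 0) (h : WeierstrassRelation (br τ r))
    (hpos : ∀ n : ℤ, 0 < n → br τ r n ≠ 0) (w : ℂ) {d : ℤ} (hd : 1 < d) :
    psiStar τ r (w + 1) 1 (d + 1) d * psiStar τ r w (-1) d (d + 1) +
      psiStar τ r (w + 1) 1 (d - 1) d * psiStar τ r w (-1) d (d - 1) =
    psiStar τ r (w + 1) (-1) (d + 1) d * psiStar τ r w 1 d (d + 1) +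
      psiStar τ r (w + 1) (-1) (d - 1) d * psiStar τ r w 1 d (d - 1) := by
  obtain ⟨E, hE⟩ := exists_psiStar_mul_psiStar_sub_eq hτ hr h w d
  have hup := hE 1 isUnit_one (hpos _ (by lia))
  have hdown := hE (-1) isUnit_one.neg (hpos _ (by lia))
  rw [← sub_eq_add_neg] at hdown
  push_cast at hup hdown
  linear_combination hup + hdown

lemma psiStar_exchange_straight (w : ℂ) (d s : ℤ) :
    psiStar τ r (w + 1) 1 (d + s) d * psiStar τ r w (-1) (d + s + s) (d + s) =
      psiStar τ r (w + 1) (-1) (d + s) d * psiStar τ r w 1 (d + s + s) (d + s) := by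
  have hpsi (ε : ℤ) : psi τ r (w - 1) ε (d + s + s) (d + s) = psi τ r w ε (d + s) d := by
    have harg : (((d + s + s : ℤ) : ℂ) - (d + s : ℤ)) * (w - 1) + (d + s + s : ℤ) =
        ((d + s : ℤ) - d) * w + (d + s : ℤ) := by push_cast; ring
    simp only [psi, harg]
  simp only [psiStar, hpsi, neg_neg, add_sub_cancel_right]
  push_cast
  ring

end IntertwiningVectors

/-! ### Fused intertwining vectors as fused rows -/

section FusedIntertwiningVectors

/-- The `j`-th height of the canonical path with `n` steps from `a` to `b`. -/
def canonicalPath (n : ℕ) (a b : ℤ) (j : ℕ) : ℤ := cpathZ a (((n : ℤ) - (a - b)) / 2) j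

/-- The product of the step weights `φ`, with spectral parameters decreasing to `u` and the signs
prescribed by the list, along the canonical path from `a` to `b`. -/
def canonicalProd (φ : ℂ → ℤ → ℤ → ℤ → ℂ) (u : ℂ) : List Bool → ℤ → ℤ → ℂ
  | [], _, _ => 1
  | e :: t, a, b => φ (u + t.length) (sg e) a (firstStep t.length a b) *
      canonicalProd φ u t (firstStep t.length a b) b

/-- The products of the reversed step weights `φ`, with spectral parameters decreasing to `u` and
the signs prescribed by the list, summed over all paths from `d` to `c`. -/
def pathSum (φ : ℂ → ℤ → ℤ → ℤ → ℂ) (u : ℂ) : List Bool → ℤ → ℤ → ℂ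
  | [], d, c => if d = c then 1 else 0
  | e :: t, d, c => ∑ s, φ (u + t.length) (sg e) (d + sg s) d * pathSum φ u t (d + sg s) c

variable {M : ℤ} {φ φ' : ℂ → ℤ → ℤ → ℤ → ℂ} {u : ℂ} {k n : ℕ} {a b c d : ℤ}

lemma sum_piFinset_succ {α β : Type*} [AddCommMonoid β] (S : Finset α)
    (F : (Fin (n + 1) → α) → β) :
    ∑ f ∈ Fintype.piFinset (fun _ => S), F f =
      ∑ x ∈ S, ∑ f ∈ Fintype.piFinset (fun _ => S), F (Fin.cons x f) := by
  have hmap := filter_piFinset_eq_map_consEquiv (fun _ : Fin (n + 1) => S) fun _ => True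
  simp only [filter_true] at hmap
  rw [hmap, sum_map, sum_product]
  rfl

lemma sum_fin_succ_arrow {α β : Type*} [Fintype α] [AddCommMonoid β]
    (F : (Fin (n + 1) → α) → β) : ∑ f, F f = ∑ x, ∑ f, F (Fin.cons x f) := by
  simpa using sum_piFinset_succ univ F

lemma adj_add_sg (d : ℤ) (s : Bool) : Adj d (d + sg s) := by
  cases s
  exacts [Or.inr rfl, Or.inl rfl]

lemma canonicalPath_zero (hab : adm n a b) : canonicalPath n a b 0 = a := by
  unfold canonicalPath cpathZ
  unfold adm at hab
  split_ifs <;> lia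

lemma canonicalPath_succ (hab : adm (n + 1) a b) (j : ℕ) :
    canonicalPath (n + 1) a b (j + 1) = canonicalPath n (firstStep n a b) b j := by
  unfold canonicalPath cpathZ firstStep
  unfold adm at *
  split_ifs <;> lia

lemma spath_zero (δ : Fin n → Bool) : spath n a δ 0 = a := by simp [spath]

lemma spath_cons (s : Bool) (δ : Fin n → Bool) (j : ℕ) :
    spath (n + 1) a (Fin.cons s δ) (j + 1) = spath n (a + sg s) δ j := by
  have htail (i : ℕ) : (if h : i + 1 < n + 1 then
      sg ((Fin.cons s δ : Fin (n + 1) → Bool) ⟨i + 1, h⟩) else 0) =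
        if h : i < n then sg (δ ⟨i, h⟩) else 0 := by
    simp only [Nat.add_lt_add_iff_right]
    rfl
  simp only [spath, sum_range_succ', htail, Nat.zero_lt_succ, dif_pos]
  rw [add_comm (∑ i ∈ range j, _), ← add_assoc]
  rfl

theorem fusedRow_eq_sum_pathSum_mul_canonicalProd {X : FaceWeight ℂ ℂ} (hX : BottomAdj X)
    (hXφ : ∀ w a b c d, Adj a b → Adj c d →
      X w a b c d = φ' w 1 d c * φ w 1 a b + φ' w (-1) d c * φ w (-1) a b)
    (hab : adm n a b) (hd : Interior M n d) :
    fusedRow M X u n a b d c =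
      ∑ ε : Fin n → Bool, pathSum φ' u (List.ofFn ε) d c * canonicalProd φ u (List.ofFn ε) a b := by
  induction n generalizing a d with
  | zero => simp [fusedRow, pathSum, canonicalProd, adm_zero.1 hab]
  | succ n ih =>
    have hsteps := sum_Ioo_eq_add_of_isUnit (hd.mono (by lia)) isUnit_one
      (fun x => X (u + n) a (firstStep n a b) d x * fusedRow M X u n (firstStep n a b) b x c)
      fun x hx => by rw [hX _ _ _ _ _ hx, zero_mul]
    have hrow (s : Bool) := ih (adm_firstStep hab) (hd.of_adj (adj_add_sg d s) le_rfl)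
    have hface (s : Bool) := hXφ (u + n) _ _ _ _ (adj_firstStep n a b) (adj_add_sg d s)
    rw [fusedRow_succ hab, hsteps]
    calc _ = ∑ s, X (u + n) a (firstStep n a b) d (d + sg s) *
          fusedRow M X u n (firstStep n a b) b (d + sg s) c := by
          rw [Fintype.sum_bool]; rfl
      _ = _ := by
        simp only [hrow, hface, sum_fin_succ_arrow (n := n), Fintype.sum_bool, mul_sum,
          ← sum_add_distrib, List.ofFn_succ, Fin.cons_zero, Fin.cons_succ, pathSum, canonicalProd,
          List.length_ofFn, show sg true = 1 from rfl, show sg false = -1 from rfl]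
        exact sum_congr rfl fun ε _ => by ring

lemma prod_canonicalPath_eq_canonicalProd (hab : adm n a b) (ε : Fin n → Bool) :
    ∏ j : Fin n, φ (u + n - ((j + 1 : ℕ) : ℂ)) (sg (ε j)) (canonicalPath n a b j)
      (canonicalPath n a b (j + 1)) = canonicalProd φ u (List.ofFn ε) a b := by
  induction n generalizing a with
  | zero => simp [canonicalProd]
  | succ n ih =>
    rw [Fin.prod_univ_succ, List.ofFn_succ, canonicalProd, List.length_ofFn,
      ← ih (adm_firstStep hab)]
    simp only [Fin.val_zero, Fin.val_succ, canonicalPath_zero hab, canonicalPath_succ hab,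
      canonicalPath_zero (adm_firstStep hab)]
    push_cast
    ring_nf

lemma sum_spath_eq_pathSum (ε : Fin n → Bool) :
    ∑ δ : Fin n → Bool with ∑ j, sg (δ j) = c - d,
      ∏ j : Fin n, φ (u + n - ((j + 1 : ℕ) : ℂ)) (sg (ε j)) (spath n d δ (j + 1)) (spath n d δ j) =
    pathSum φ u (List.ofFn ε) d c := by
  induction n generalizing d with
  | zero =>
    simp only [pathSum, univ_eq_empty, sum_empty, prod_empty, sum_filter, Fintype.sum_unique,
      List.ofFn_zero]
    exact if_congr (by lia) rfl rfl
  | succ n ih =>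
    rw [List.ofFn_succ, pathSum, sum_filter, sum_fin_succ_arrow]
    refine sum_congr rfl fun s _ => ?_
    rw [← ih, List.length_ofFn, mul_sum, sum_filter]
    refine sum_congr rfl fun δ _ => ?_
    simp only [Fin.sum_univ_succ, Fin.prod_univ_succ, Fin.cons_zero, Fin.cons_succ, Fin.val_zero,
      Fin.val_succ, spath_cons, spath_zero]
    refine if_congr (by lia) ?_ rfl
    push_cast
    ring_nf

lemma sum_sg_eq (ε : Fin n → Bool) :
    ∑ j, sg (ε j) = n - 2 * ((List.ofFn ε).count false : ℤ) := by
  induction n with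
  | zero => simp
  | succ n ih =>
    rw [Fin.sum_univ_succ, ih, List.ofFn_succ, List.count_cons]
    cases ε 0 <;> simp [sg] <;> ring

lemma perm_ofFn_of_sum_sg_eq {ε ε' : Fin n → Bool} (h : ∑ j, sg (ε j) = ∑ j, sg (ε' j)) :
    (List.ofFn ε).Perm (List.ofFn ε') := by
  rw [sum_sg_eq, sum_sg_eq] at h
  have hε := List.count_not_add_count (List.ofFn ε) true
  have hε' := List.count_not_add_count (List.ofFn ε') true
  rw [List.length_ofFn, Bool.not_true] at hε hε'
  refine List.perm_iff_count.2 fun e => ?_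
  cases e <;> lia

lemma sum_sg_decide_succ_le {m : ℤ} (hm : 0 ≤ m) (hmn : m ≤ n) :
    ∑ j : Fin n, sg (decide (((j : ℕ) + 1 : ℤ) ≤ m)) = 2 * m - n := by
  have hrange (N : ℕ) : ∑ j ∈ range N, sg (decide (((j : ℕ) + 1 : ℤ) ≤ m)) =
      if (N : ℤ) ≤ m then (N : ℤ) else 2 * m - N := by
    induction N with
    | zero => simp [hm]
    | succ N ih =>
      rw [sum_range_succ, ih]
      unfold sg
      grind
  rw [Fin.sum_univ_eq_sum_range fun j => sg (decide ((j + 1 : ℤ) ≤ m)), hrange]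
  split_ifs <;> lia

variable {τ : ℂ} {r : ℝ}

theorem pathSum_psiStar_eq_of_perm (hτ : 0 < τ.im) (hr : r ≠ 0)
    (h : WeierstrassRelation (br τ r)) (hpos : ∀ n : ℤ, 0 < n → br τ r n ≠ 0)
    {s t : List Bool} (hst : s.Perm t) (hd : s.length < d) :
    pathSum (psiStar τ r) u s d c = pathSum (psiStar τ r) u t d c := by
  induction hst generalizing d with
  | nil => rfl
  | cons e hst ih =>
    simp only [List.length_cons] at hd
    simp only [pathSum, hst.length_eq]
    exact sum_congr rfl fun s _ => by rw [ih (by cases s <;> simp only [sg] <;> grind)]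
  | trans hst _ ih ih' => rw [ih hd, ih' (hst.length_eq ▸ hd)]
  | swap e e' t =>
    have hswap : pathSum (psiStar τ r) u (true :: false :: t) d c =
        pathSum (psiStar τ r) u (false :: true :: t) d c := by
      have hturn := psiStar_exchange_turn hτ hr h hpos (u + t.length) (d := d)
        (by simp only [List.length_cons] at hd; lia)
      have hup := psiStar_exchange_straight (τ := τ) (r := r) (u + t.length) d 1
      have hdown := psiStar_exchange_straight (τ := τ) (r := r) (u + t.length) d (-1)
      simp only [← sub_eq_add_neg] at hdown
      simp only [pathSum, List.length_cons, Fintype.sum_bool, show sg true = 1 from rfl,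
        show sg false = -1 from rfl, Nat.cast_succ, ← add_assoc u, ← sub_eq_add_neg,
        sub_add_cancel, add_sub_cancel_right]
      linear_combination pathSum (psiStar τ r) u t d c * hturn +
        pathSum (psiStar τ r) u t (d + 1 + 1) c * hup +
        pathSum (psiStar τ r) u t (d - 1 - 1) c * hdown
    cases e <;> cases e'
    exacts [rfl, hswap, hswap.symm, rfl]

lemma psiF_eq_sum_canonicalProd (hab : adm k a b) (μ : ℤ) :
    psiF τ r k μ u a b = ∑ ε : Fin k → Bool with ∑ j, sg (ε j) = μ,
      canonicalProd (psi τ r) u (List.ofFn ε) a b := by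
  rw [psiF, if_pos hab]
  exact sum_congr rfl fun ε _ => prod_canonicalPath_eq_canonicalProd hab ε

lemma psiStarF_eq_pathSum (hτ : 0 < τ.im) (hr : r ≠ 0) (h : WeierstrassRelation (br τ r))
    (hpos : ∀ n : ℤ, 0 < n → br τ r n ≠ 0) (hc : k < c) (hcd : adm k c d) (ε : Fin k → Bool) :
    psiStarF τ r k (∑ j, sg (ε j)) u d c = pathSum (psiStar τ r) u (List.ofFn ε) c d := by
  set m : ℤ := (k + ∑ j, sg (ε j)) / 2 with hm
  have hcount : (List.ofFn ε).count false ≤ k := by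
    simpa using List.count_le_length (a := false) (l := List.ofFn ε)
  have hsum : ∑ j : Fin k, sg (decide (((j : ℕ) + 1 : ℤ) ≤ m)) = ∑ j, sg (ε j) := by
    rw [sum_sg_eq ε] at hm ⊢
    rw [sum_sg_decide_succ_le (by lia) (by lia)]
    lia
  rw [← pathSum_psiStar_eq_of_perm hτ hr h hpos (perm_ofFn_of_sum_sg_eq hsum) (by simpa using hc),
    ← sum_spath_eq_pathSum, psiStarF, if_pos hcd]
  refine sum_congr rfl fun δ _ => prod_congr rfl fun j _ => ?_
  have hsign : sg (decide ((j + 1 : ℤ) ≤ m)) = if (j + 1 : ℤ) ≤ m then 1 else -1 := by simp [sg]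
  rw [hsign]

lemma Lk_eq_zero_of_not_adm_top (hab : ¬ adm k a b) : Lk τ r k u a b c d = 0 := by
  simp [Lk, psiF, hab]

lemma Lk_eq_zero_of_not_adm_bottom (hcd : ¬ adm k c d) : Lk τ r k u a b c d = 0 := by
  simp [Lk, psiStarF, hcd]

lemma Lk_eq_sum_pathSum_mul_canonicalProd (hτ : 0 < τ.im) (hr : r ≠ 0)
    (h : WeierstrassRelation (br τ r)) (hpos : ∀ n : ℤ, 0 < n → br τ r n ≠ 0)
    (hc : k < c) (hab : adm k a b) (hcd : adm k c d) :
    Lk τ r k u a b c d = ∑ ε : Fin k → Bool,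
      pathSum (psiStar τ r) u (List.ofFn ε) c d * canonicalProd (psi τ r) u (List.ofFn ε) a b := by
  have hcount : ∀ ε ∈ (univ : Finset (Fin k → Bool)),
      (List.ofFn ε).count false ∈ range (k + 1) := fun ε _ => by
    simpa [Nat.lt_succ_iff] using List.count_le_length (a := false) (l := List.ofFn ε)
  rw [← sum_fiberwise_of_maps_to hcount, Lk]
  refine sum_congr rfl fun i _ => ?_
  rw [psiF_eq_sum_canonicalProd hab, mul_sum]
  refine sum_congr (filter_congr fun ε _ => by rw [sum_sg_eq]; lia) fun ε hε => ?_
  have hμ : ∑ j, sg (ε j) = k - 2 * (i : ℤ) := by rw [sum_sg_eq, (mem_filter.1 hε).2]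
  rw [← hμ, psiStarF_eq_pathSum hτ hr h hpos hc hcd]

theorem exists_Lk_eq_fusedRow_lWeight (hτ : 0 < τ.im) (hr : r ≠ 0)
    (h : WeierstrassRelation (br τ r)) (hpos : ∀ n : ℤ, 0 < n → br τ r n ≠ 0) :
    ∃ κ : ℂ, ∀ {M : ℤ} {k : ℕ} {c : ℤ} (u : ℂ) (a b d : ℤ), Interior M k c →
      Lk τ r k u a b c d = fusedRow M (lWeight (br τ r) κ) u k a b c d := by
  obtain ⟨κ, hκ⟩ := exists_lWeight_eq hτ hr h
  refine ⟨κ, fun {_ k c} u a b d hc => ?_⟩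
  by_cases hab : adm k a b
  · by_cases hcd : adm k c d
    · rw [Lk_eq_sum_pathSum_mul_canonicalProd hτ hr h hpos hc.1 hab hcd,
        fusedRow_eq_sum_pathSum_mul_canonicalProd bottomAdj_lWeight hκ hab hc]
    · rw [Lk_eq_zero_of_not_adm_bottom hcd,
        fusedRow_eq_zero_of_not_adm_bottom bottomAdj_lWeight hcd]
  · rw [Lk_eq_zero_of_not_adm_top hab, fusedRow_eq_zero_of_not_adm_top hab]

end FusedIntertwiningVectors

/-! ### Fused face weights as fused rows -/

section FusedFaceWeights

variable {M : ℤ} {X Y : FaceWeight ℂ ℂ} {u v w : ℂ} {k l m n : ℕ} {a b c d : ℤ}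

lemma seqI_zero (f : Fin (n - 1) → ℤ) : seqI n d c f 0 = d := rfl

lemma seqI_succ_eq (f : Fin n → ℤ) (i : Fin n) : seqI (n + 1) d c f (i + 1) = f i := by
  simp [seqI]

lemma seqI_cons (x : ℤ) (f : Fin n → ℤ) (j : ℕ) :
    seqI (n + 2) d c (Fin.cons x f : Fin (n + 1) → ℤ) (j + 1) = seqI (n + 1) x c f j := by
  cases j with
  | zero => simp [seqI]
  | succ i =>
    simp only [seqI, Nat.add_lt_add_iff_right, Nat.succ_ne_zero, dif_neg, not_false_eq_true]
    rfl

/-- The weight of a row of `n` faces with the canonical path from `a` to `b` on top and the path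
from `d` to `c` with interior heights `f` at the bottom. -/
def rowProd (X : FaceWeight ℂ ℂ) (u : ℂ) (n : ℕ) (a b d c : ℤ) (f : Fin (n - 1) → ℤ) : ℂ :=
  ∏ j ∈ range n, X (u + n - (j + 1)) (canonicalPath n a b j) (canonicalPath n a b (j + 1))
    (seqI n d c f j) (seqI n d c f (j + 1))

lemma rowProd_one (hab : adm 1 a b) (f : Fin 0 → ℤ) : rowProd X u 1 a b d c f = X u a b d c := by
  have hb : canonicalPath 0 (firstStep 0 a b) b 0 = b :=
    (canonicalPath_zero (adm_firstStep hab)).trans (adm_zero.1 (adm_firstStep hab))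
  simp [rowProd, canonicalPath_zero hab, canonicalPath_succ hab, hb, seqI]

lemma rowProd_cons (hab : adm (n + 2) a b) (x : ℤ) (f : Fin n → ℤ) :
    rowProd X u (n + 2) a b d c (Fin.cons x f : Fin (n + 1) → ℤ) =
      X (u + (n + 1 : ℕ)) a (firstStep (n + 1) a b) d x *
        rowProd X u (n + 1) (firstStep (n + 1) a b) b x c f := by
  simp only [rowProd, prod_range_succ' _ (n + 1), canonicalPath_succ hab, canonicalPath_zero hab,
    canonicalPath_zero (adm_firstStep hab), seqI_cons, seqI_zero]
  rw [mul_comm]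
  push_cast
  ring_nf

lemma sum_rowProd_eq_fusedRow (hX : BottomAdj X) (hab : adm (n + 1) a b)
    (hd : Interior M (n + 1) d) :
    ∑ f ∈ Fintype.piFinset fun _ : Fin n => Ioo 0 M, rowProd X u (n + 1) a b d c f =
      fusedRow M X u (n + 1) a b d c := by
  induction n generalizing a d with
  | zero =>
    have hb : firstStep 0 a b = b := adm_zero.1 (adm_firstStep hab)
    rw [fusedRow_succ hab, hb, sum_eq_single c]
    · simp [rowProd_one hab, fusedRow]
    · intro d₁ _ hd₁
      simp [fusedRow, hd₁]
    · intro hc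
      rw [hX _ _ _ _ _ fun hdc => hc (hd.of_adj hdc le_rfl).mem_Ioo, zero_mul]
  | succ n ih =>
    rw [fusedRow_succ hab, sum_piFinset_succ]
    refine sum_congr rfl fun x _ => ?_
    simp only [rowProd_cons hab, ← mul_sum]
    by_cases hx : Adj d x
    · rw [ih (adm_firstStep hab) (hd.of_adj hx le_rfl)]
    · rw [hX _ _ _ _ _ hx, zero_mul, zero_mul]

lemma mem_Ioo_of_rowProd_ne_zero (hX : BottomAdj X) (hd : Interior M (n + 1) d) {f : Fin n → ℤ}
    (hf : rowProd X u (n + 1) a b d c f ≠ 0) (i : Fin n) : f i ∈ Ioo 0 M := by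
  have hadj (j : ℕ) (hj : j < n + 1) :
      Adj (seqI (n + 1) d c f j) (seqI (n + 1) d c f (j + 1)) :=
    not_not.1 fun h => prod_ne_zero_iff.1 hf j (mem_range.2 hj) (hX _ _ _ _ _ h)
  have hint (j : ℕ) (hj : j ≤ n) : Interior M (n + 1 - j) (seqI (n + 1) d c f j) := by
    induction j with
    | zero => exact hd
    | succ j ih => exact (ih (by lia)).of_adj (hadj j (by lia)) (by lia)
  rw [← seqI_succ_eq (d := d) (c := c) f i]
  exact (hint (i + 1) i.2).mem_Ioo

lemma tsum_rowProd_eq_fusedRow (hX : BottomAdj X) (hn : 1 ≤ n) (hab : adm n a b)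
    (hd : Interior M n d) :
    ∑' f : Fin (n - 1) → ℤ, rowProd X u n a b d c f = fusedRow M X u n a b d c := by
  obtain ⟨n, rfl⟩ := Nat.exists_eq_add_of_le' hn
  rw [← sum_rowProd_eq_fusedRow hX hab hd]
  refine tsum_eq_sum fun f hf => ?_
  contrapose! hf
  exact Fintype.mem_piFinset.2 (mem_Ioo_of_rowProd_ne_zero hX hd hf)

lemma fusedRow_congr (hX : BottomAdj X) (hY : BottomAdj Y)
    (hXY : ∀ j < n, ∀ a b d c, Interior M m d → Adj d c → X (u + j) a b d c = Y (u + j) a b d c)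
    (hd : Interior M (n + m) d) : fusedRow M X u n a b d c = fusedRow M Y u n a b d c := by
  induction n generalizing a d with
  | zero => rfl
  | succ n ih =>
    simp only [fusedRow]
    refine if_congr Iff.rfl (sum_congr rfl fun x _ => ?_) rfl
    by_cases hx : Adj d x
    · rw [hXY n n.lt_succ_self _ _ _ _ (hd.mono (by lia)) hx,
        ih (fun j hj => hXY j (by lia)) (hd.of_adj hx (by lia))]
    · rw [hX _ _ _ _ _ hx, hY _ _ _ _ _ hx, zero_mul, zero_mul]

variable {τ : ℂ} {r : ℝ}

lemma Wb_eq_zero (h : ¬ (Adj a b ∧ Adj a d ∧ Adj b c ∧ Adj d c)) : Wb τ r w a b d c = 0 := by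
  unfold Adj at h
  unfold Wb
  repeat rw [if_neg (by lia)]

lemma bottomAdj_Wb : BottomAdj (Wb τ r) := fun _ _ _ _ _ h => Wb_eq_zero (by tauto)

lemma Wb_eq_faceWeight (h : WeierstrassRelation (br τ r)) (hw : br τ r (1 + w) ≠ 0) :
    Wb τ r w a b d c = faceWeight (br τ r) w a b d c := by
  by_cases hadj : Adj a b ∧ Adj a d ∧ Adj b c ∧ Adj d c
  swap; · rw [Wb_eq_zero hadj, faceWeight_eq_zero hadj]
  have hne : a + 1 ≠ a - 1 := by lia
  have hne₂ : a ≠ a - 2 := by lia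
  obtain ⟨rfl | rfl, rfl | rfl, hbc, hdc⟩ := hadj
  · rcases hbc with rfl | rfl
    · rw [faceWeight_straight hw isUnit_one]
      simp [Wb, add_assoc]
    · rw [faceWeight_diag hw isUnit_one a]
      simp [Wb, diagWeight, hne]
  · obtain rfl : c = a := by unfold Adj at hbc hdc; lia
    rw [faceWeight_offDiag hw isUnit_one c]
    simp [Wb, offDiagWeight, hne, hne.symm]
  · obtain rfl : c = a := by unfold Adj at hbc hdc; lia
    rw [faceWeight_offDiag hw isUnit_one.neg (-c)]
    simp [Wb, offDiagWeight, hne, hne.symm, h.odd c,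
      h.eq_neg_of_eq_neg (c - 1 : ℂ) (y := -c + 1), neg_div_neg_eq]
  · rcases hbc with rfl | rfl
    · rw [faceWeight_diag hw isUnit_one.neg (-a)]
      simp [Wb, diagWeight, hne.symm, hne₂, h.odd a, h.eq_neg_of_eq_neg (a + w) (y := -a - w),
        neg_div_neg_eq]
    · rw [faceWeight_straight hw isUnit_one.neg]
      simp [Wb, sub_sub]

lemma Wk1_eq_zero_of_not_adj_left (hk : 1 ≤ k) (had : ¬ Adj a d) : Wk1 τ r k u a b d c = 0 := by
  unfold Wk1
  split_ifs with hab
  · have hprod (f : Fin (k - 1) → ℤ) : rowProd (Wb τ r) u k a b d c f = 0 := by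
      refine prod_eq_zero (mem_range.2 hk) (Wb_eq_zero fun h => had ?_)
      rw [canonicalPath_zero hab, seqI_zero] at h
      exact h.2.1
    exact (tsum_congr hprod).trans tsum_zero
  · rfl

lemma Wk1_eq_fusedRow (h : WeierstrassRelation (br τ r)) (hk : 1 ≤ k) (hd : Interior M k d)
    (hu : ∀ j < k, br τ r (1 + (u + j)) ≠ 0) :
    Wk1 τ r k u a b d c = fusedRow M (faceWeight (br τ r)) u k a b d c := by
  by_cases hab : adm k a b
  · rw [Wk1, if_pos hab, ← fusedRow_congr (m := 0) bottomAdj_Wb bottomAdj_faceWeight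
      (fun j hj _ _ _ _ _ _ => Wb_eq_faceWeight h (hu j hj)) hd]
    exact tsum_rowProd_eq_fusedRow bottomAdj_Wb hk hab hd
  · rw [Wk1, if_neg hab, fusedRow_eq_zero_of_not_adm_top hab]

theorem Wkl_eq_fusedRow (h : WeierstrassRelation (br τ r)) (hk : 1 ≤ k) (hl : 1 ≤ l)
    (huv : ∀ j : ℤ, |j| ≤ (k : ℤ) + l → br τ r (1 + u - v + j) ≠ 0)
    (ha : Interior M (l + (k + 1)) a) :
    Wkl τ r k l (u - v) a b d c =
      fusedRow M (turnedFusedRow M (faceWeight (br τ r)) k u) v l b c a d := by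
  have hW : BottomAdj fun w b c a d => Wk1 τ r k (u - w) a b d c :=
    fun _ _ _ _ _ => Wk1_eq_zero_of_not_adj_left hk
  by_cases hbc : adm l b c
  · rw [← fusedRow_congr hW (bottomAdj_turnedFusedRow sideAdj_faceWeight hk) ?_ ha,
      ← tsum_rowProd_eq_fusedRow hW hl hbc (ha.mono (by lia)), Wkl, if_pos hbc]
    · refine tsum_congr fun f => prod_congr rfl fun i _ => ?_
      rw [show u - v - l + (i + 1) = u - (v + l - (i + 1)) by ring]
      rfl
    · intro j hj b c a d ha had
      refine Wk1_eq_fusedRow h hk (ha.of_adj had le_rfl) fun i hi => ?_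
      have hne := huv (i - j) (by rw [abs_le]; lia)
      push_cast at hne
      rwa [show 1 + (u - (v + j) + i) = 1 + u - v + (i - j) by ring]
  · rw [Wkl, if_neg hbc, fusedRow_eq_zero_of_not_adm_top hbc]

end FusedFaceWeights

/-! ### The Yang–Baxter relation -/

section YangBaxter

variable {τ : ℂ} {r : ℝ} {k l : ℕ} {u v : ℂ} {M a b c d e f g : ℤ}

lemma sixj_left_eq_zero (ha : Interior M l a) (hd : d ∉ Ioo 0 M) :
    Wkl τ r k l (u - v) a b d c * Lk τ r k u d c f e * Lk τ r l v a d g f = 0 := by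
  have had : ¬ adm l a d := fun had =>
    hd (ha.of_natAbs_le (m := 0) (by unfold adm at had; lia)).mem_Ioo
  rw [Lk_eq_zero_of_not_adm_top had, mul_zero]

lemma sixj_right_eq_zero (hg : Interior M k g) (hd : d ∉ Ioo 0 M) :
    Lk τ r k u a b g d * Lk τ r l v b c d e * Wkl τ r k l (u - v) g d f e = 0 := by
  have hgd : ¬ adm k g d := fun hgd =>
    hd (hg.of_natAbs_le (m := 0) (by unfold adm at hgd; lia)).mem_Ioo
  rw [Lk_eq_zero_of_not_adm_bottom hgd, zero_mul, zero_mul]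

lemma sum_Ioo_sixj_yang_baxter (hτ : 0 < τ.im) (hr : r ≠ 0)
    (hpos : ∀ n : ℤ, 0 < n → br τ r n ≠ 0)
    (huv : ∀ j : ℤ, |j| ≤ (k : ℤ) + l → br τ r (1 + u - v + j) ≠ 0) (hk : 1 ≤ k) (hl : 1 ≤ l)
    (ha : Interior M (2 * k + 2 * l) a) (hb : Interior M (2 * k + 2 * l) b)
    (hg : Interior M (2 * k + 2 * l) g) (hf : Interior M k f) (he : e ∈ Ioo 0 M) :
    ∑ d ∈ Ioo 0 M, Wkl τ r k l (u - v) a b d c * Lk τ r k u d c f e * Lk τ r l v a d g f =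
      ∑ d ∈ Ioo 0 M, Lk τ r k u a b g d * Lk τ r l v b c d e * Wkl τ r k l (u - v) g d f e := by
  have h : WeierstrassRelation (br τ r) :=
    weierstrassRelation_br hτ hr (by simpa using hpos 1 one_pos)
  obtain ⟨κ, hLk⟩ := exists_Lk_eq_fusedRow_lWeight hτ hr h hpos
  convert fused_yang_baxter (k := k) (l := l) (u := u) (v := v) (c := c) (f := f) hk hl
    bottomAdj_faceWeight (topExchange_faceWeight h hpos) sideAdj_faceWeight
    (rightExchange_faceWeight h hpos) topAdj_lWeight bottomAdj_lWeight
    (topExchange_lWeight (κ := κ) h hpos) (isIntertwiner_faceWeight_lWeight h hpos)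
    ha hb hg he using 2 with d _ d _
  · rw [Wkl_eq_fusedRow h hk hl huv (ha.mono (by lia)), hLk _ _ _ _ hf,
      hLk _ _ _ _ (hg.mono (by lia))]
  · rw [Wkl_eq_fusedRow h hk hl huv (hg.mono (by lia)), hLk _ _ _ _ (hg.mono (by lia))]
    by_cases hgd : adm k g d
    · rw [hLk _ _ _ _ (hg.of_natAbs_le (by unfold adm at hgd; lia))]
    · simp only [fusedRow_eq_zero_of_not_adm_bottom bottomAdj_lWeight hgd, zero_mul]

end YangBaxter

/-- Yang-Baxter relation for the elliptic 6j-symbols. -/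
theorem sixj_yang_baxter (τ : ℂ) (r : ℝ) (hτ : 0 < τ.im) (hr : 0 < r) (hirr : Irrational r)
    (k l : ℕ) (hk : 1 ≤ k) (hl : 1 ≤ l)
    (a b c e f g : ℤ)
    (hab : (a - b).natAbs ≤ k ∧ (a - b - (k : ℤ)) % 2 = 0)
    (hfe : (f - e).natAbs ≤ k ∧ (f - e - (k : ℤ)) % 2 = 0)
    (hbc : (b - c).natAbs ≤ l ∧ (b - c - (l : ℤ)) % 2 = 0)
    (hgf : (g - f).natAbs ≤ l ∧ (g - f - (l : ℤ)) % 2 = 0)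
    (hpos : 2 * ((k : ℤ) + l) < a ∧ 2 * ((k : ℤ) + l) < b ∧ 2 * ((k : ℤ) + l) < c ∧
      2 * ((k : ℤ) + l) < e ∧ 2 * ((k : ℤ) + l) < f ∧ 2 * ((k : ℤ) + l) < g)
    (u v : ℂ)
    (hbr : ∀ s : ℤ, 0 < s → br τ r (s : ℂ) ≠ 0)
    (hu : ∀ j : ℤ, |j| ≤ (k : ℤ) + l → br τ r (u + (j : ℂ)) ≠ 0)
    (hv : ∀ j : ℤ, |j| ≤ (k : ℤ) + l → br τ r (v + (j : ℂ)) ≠ 0)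
    (huv : ∀ j : ℤ, |j| ≤ (k : ℤ) + l → br τ r (u - v + (j : ℂ)) ≠ 0)
    (huv1 : ∀ j : ℤ, |j| ≤ (k : ℤ) + l → br τ r (1 + u - v + (j : ℂ)) ≠ 0) :
    {d : ℤ | Wkl τ r k l (u - v) a b d c * Lk τ r k u d c f e *
        Lk τ r l v a d g f ≠ 0}.Finite ∧
    {d : ℤ | Lk τ r k u a b g d * Lk τ r l v b c d e *
        Wkl τ r k l (u - v) g d f e ≠ 0}.Finite ∧
    (∑' d : ℤ, Wkl τ r k l (u - v) a b d c * Lk τ r k u d c f e * Lk τ r l v a d g f) =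
      ∑' d : ℤ, Lk τ r k u a b g d * Lk τ r l v b c d e * Wkl τ r k l (u - v) g d f e := by
  obtain ⟨ha, hb, hc, he, hf, hg⟩ := hpos
  set M : ℤ := a + b + c + e + f + g + 2 * (k + l) + 1
  have ha' : Interior M (2 * k + 2 * l) a := by unfold Interior; lia
  have hb' : Interior M (2 * k + 2 * l) b := by unfold Interior; lia
  have hg' : Interior M (2 * k + 2 * l) g := by unfold Interior; lia
  have hf' : Interior M k f := by unfold Interior; lia
  have he' : e ∈ Ioo 0 M := by rw [mem_Ioo]; lia
  have hleft (d : ℤ) (hd : d ∉ Ioo 0 M) :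
      Wkl τ r k l (u - v) a b d c * Lk τ r k u d c f e * Lk τ r l v a d g f = 0 :=
    sixj_left_eq_zero (ha'.mono (by lia)) hd
  have hright (d : ℤ) (hd : d ∉ Ioo 0 M) :
      Lk τ r k u a b g d * Lk τ r l v b c d e * Wkl τ r k l (u - v) g d f e = 0 :=
    sixj_right_eq_zero (hg'.mono (by lia)) hd
  refine ⟨(Ioo 0 M).finite_toSet.subset fun d => ?_, (Ioo 0 M).finite_toSet.subset fun d => ?_, ?_⟩
  · exact not_imp_comm.1 (hleft d)
  · exact not_imp_comm.1 (hright d)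
  · rw [tsum_eq_sum hleft, tsum_eq_sum hright]
    exact sum_Ioo_sixj_yang_baxter hτ hr.ne' hbr huv1 hk hl ha' hb' hg' hf' he'

end Ell
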